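/- arXiv:1009.4848 — 2 statements merged into one kernel-verified Lean document; each statement's English description precedes it below -/
import Mathlib

section
/- Let 1 < p < ∞ and 0 < s ≤ 1 with sp ≤ N. Then there exists λ = λ(s, p, N) > 0 such that for all real numbers a < b and every η ∈ C_c^∞(ℝ^N) whose support is contained in the slab {x ∈ ℝ^N : a < x₁ < b}, one has ∬_{ℝ^N×ℝ^N} |η(x)−η(y)|^p / |x−y|^{N+sp} dx dy ≥ λ (b−a)^{−sp} ∫_{ℝ^N} |η(x)|^p dx. (This is the scaling-correct form of the inequality of Tartar stated in the paper.) -/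
open MeasureTheory Real Set Filter Metric

noncomputable section

abbrev Euc (N : ℕ) := EuclideanSpace ℝ (Fin N)

/-- Spatial Laplacian of `f : ℝ^N → ℝ`. -/
def lapl {N : ℕ} (f : Euc N → ℝ) (x : Euc N) : ℝ :=
  ∑ i : Fin N,
    fderiv ℝ (fun y => fderiv ℝ f y (EuclideanSpace.single i 1)) x (EuclideanSpace.single i 1)

/-- The capacity `C_{2/q,q'}` of a set `A ⊆ ℝ^N`. -/
def capQ (N : ℕ) (q : ℝ) (A : Set (Euc N)) : ℝ :=
  sInf { c : ℝ | ∃ φ : Euc N → ℝ, ContDiff ℝ (⊤ : ℕ∞) φ ∧ HasCompactSupport φ ∧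
      (∃ U : Set (Euc N), IsOpen U ∧ A ⊆ U ∧ ∀ x ∈ U, 1 ≤ φ x) ∧
      c = (∫ x, φ x ^ (q / (q - 1))) +
          ∫ x, ∫ y, |φ x - φ y| ^ (q / (q - 1)) / ‖x - y‖ ^ ((N : ℝ) + 2 / (q - 1)) }

/-- The spherical shell piece `F_n` of `F` around `x` at time `t`. -/
def shell (N : ℕ) (F : Set (Euc N)) (x : Euc N) (t : ℝ) (n : ℕ) : Set (Euc N) :=
  {y | y ∈ F ∧ Real.sqrt ((n : ℝ) * t) ≤ dist x y ∧ dist x y ≤ Real.sqrt (((n : ℝ) + 1) * t)}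

/-- The parabolic capacitary potential `W_F`. -/
def Wpot (N : ℕ) (q : ℝ) (F : Set (Euc N)) (x : Euc N) (t : ℝ) : ℝ :=
  t ^ (-(N : ℝ) / 2) *
    ∑' n : ℕ,
      Real.sqrt (((n : ℝ) + 1) * t) ^ ((N : ℝ) - 2 / (q - 1)) * Real.exp (-(n : ℝ) / 4) *
        capQ N q ((fun y => (Real.sqrt (((n : ℝ) + 1) * t))⁻¹ • y) '' shell N F x t n)

/-- `u` is a positive solution of `∂ₜu - Δu + u^q = 0` in `Q_∞` whose initial
trace vanishes outside the closed set `F`. -/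
def IsSol (N : ℕ) (q : ℝ) (u : Euc N → ℝ → ℝ) (F : Set (Euc N)) : Prop :=
  ContDiffOn ℝ 2 (fun p : Euc N × ℝ => u p.1 p.2) (Set.univ ×ˢ Set.Ioi (0 : ℝ)) ∧
  (∀ x t, 0 < t → 0 < u x t) ∧
  (∀ x t, 0 < t → deriv (u x) t - lapl (fun y => u y t) x + u x t ^ q = 0) ∧
  (∀ E : Set (Euc N), IsCompact E → E ⊆ Fᶜ →
    Tendsto (fun t => sSup ((fun x => u x t) '' E)) (nhdsWithin 0 (Set.Ioi 0)) (nhds 0))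

/-- The heat potential of a function. -/
def heatPot (N : ℕ) (η : Euc N → ℝ) (x : Euc N) (t : ℝ) : ℝ :=
  ∫ y, (4 * π * t) ^ (-(N : ℝ) / 2) * Real.exp (-‖x - y‖ ^ 2 / (4 * t)) * η y

/-- The heat potential of a measure. -/
def heatPotM (N : ℕ) (μ : Measure (Euc N)) (x : Euc N) (t : ℝ) : ℝ :=
  ∫ y, (4 * π * t) ^ (-(N : ℝ) / 2) * Real.exp (-‖x - y‖ ^ 2 / (4 * t)) ∂μ

/-- The class `𝒯_{r,ρ}(K)` of test functions. -/
def TestFun (N : ℕ) (r ρ : ℝ) (K : Set (Euc N)) (η : Euc N → ℝ) : Prop :=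
  ContDiff ℝ (⊤ : ℕ∞) η ∧ HasCompactSupport η ∧ tsupport η ⊆ Metric.ball (0 : Euc N) (r + ρ) ∧
  (∀ x, 0 ≤ η x ∧ η x ≤ 1) ∧ (∀ x ∈ K, η x = 1)

/-- `‖R[η]‖_{L^{q'}}^{q'} = ∬_{Q_∞} (|∇ℍ[η]|² + |∂ₜℍ[η]|)^{q'} dx dt`. -/
def Rnorm (N : ℕ) (q : ℝ) (η : Euc N → ℝ) : ℝ :=
  ∫ t in Set.Ioi (0 : ℝ), ∫ x,
    (‖fderiv ℝ (fun y => heatPot N η y t) x‖ ^ 2 +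
      |deriv (fun τ => heatPot N η x τ) t|) ^ (q / (q - 1))


open scoped ENNReal Topology

lemma nonint (N : ℕ) (hN : 0 < N) (p : ℝ) (hp : 1 < p) (η : Euc N → ℝ) (x : Euc N)
    (D : Euc N →L[ℝ] ℝ) (hD : HasFDerivAt η D x) (hD0 : D ≠ 0) :
    ¬ Integrable (fun y => |η x - η y| ^ p / ‖x - y‖ ^ ((N : ℝ) + 1 * p)) := by
  intro hint
  have : Nonempty (Fin N) := ⟨⟨0, hN⟩⟩
  obtain ⟨v0, hv0⟩ : ∃ v, D v ≠ 0 := by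
    by_contra! h
    exact hD0 (ContinuousLinearMap.ext h)
  obtain ⟨v, hv⟩ : ∃ v, D v = 1 := ⟨(D v0)⁻¹ • v0, by simp [hv0]⟩
  have hDn : 0 < ‖D‖ := norm_pos_iff.2 hD0
  set ρ : ℝ := 1 / (2 * ‖D‖) with hρ
  have hρ0 : 0 < ρ := by positivity
  set B : ℝ := ‖v‖ + ρ with hB
  have hB0 : 0 < B := by positivity
  have h1 := hD.isLittleO.def (show (0 : ℝ) < 1 / (4 * B) by positivity)
  obtain ⟨r, hr, h2⟩ := Metric.eventually_nhds_iff.1 h1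
  set c : ℝ := (1 / 4) ^ p / B ^ ((N : ℝ) + 1 * p) with hc
  have hc0 : 0 < c := by positivity
  -- lower bound
  have key : ∀ t : ℝ, 0 < t → t < r / B → ∀ y ∈ Metric.ball (x + t • v) (t * ρ),
      c * t ^ (-(N : ℝ)) ≤ |η x - η y| ^ p / ‖x - y‖ ^ ((N : ℝ) + 1 * p) := by
    intro t ht htr y hy
    obtain ⟨w, hw⟩ : ∃ w, w = y - (x + t • v) := ⟨_, rfl⟩
    have hwn : ‖w‖ < t * ρ := by rw [hw]; simpa [dist_eq_norm] using hy
    have hyx : y - x = t • v + w := by rw [hw]; abel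
    have hn : ‖y - x‖ ≤ t * B := by
      rw [hyx]
      calc ‖t • v + w‖ ≤ ‖t • v‖ + ‖w‖ := norm_add_le _ _
        _ ≤ t * ‖v‖ + t * ρ := by
            rw [norm_smul, Real.norm_of_nonneg ht.le]; linarith
        _ = t * B := by rw [hB]; ring
    have hlt : dist y x < r := by
      rw [dist_eq_norm]
      refine lt_of_le_of_lt hn ?_
      rwa [lt_div_iff₀ hB0] at htr
    have h3 := h2 hlt
    have h4 : ‖η y - η x - D (y - x)‖ ≤ t / 4 := by
      refine h3.trans ?_
      calc 1 / (4 * B) * ‖y - x‖ ≤ 1 / (4 * B) * (t * B) := by gcongr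
        _ = t / 4 := by field_simp
    have h5 : |D w| ≤ t / 2 := by
      have := D.le_opNorm w
      rw [Real.norm_eq_abs] at this
      refine this.trans ?_
      calc ‖D‖ * ‖w‖ ≤ ‖D‖ * (t * ρ) := by gcongr
        _ = t / 2 := by rw [hρ]; field_simp
    have h6 : D (y - x) = t + D w := by rw [hyx, map_add, map_smul, hv]; simp
    rw [h6, Real.norm_eq_abs] at h4
    have h7 : t / 4 ≤ |η x - η y| := by
      rw [abs_sub_comm]
      refine le_trans ?_ (le_abs_self _)
      have := (abs_le.1 h4).1
      have := (abs_le.1 h5).1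
      linarith
    have hne : x - y ≠ 0 := by
      intro h
      rw [sub_eq_zero.1 h] at h7
      simp at h7; linarith
    have hpos : 0 < ‖x - y‖ := norm_pos_iff.2 hne
    rw [norm_sub_rev] at hn
    calc c * t ^ (-(N : ℝ)) = (t / 4) ^ p / (t * B) ^ ((N : ℝ) + 1 * p) := by
          rw [hc, Real.mul_rpow ht.le hB0.le, Real.rpow_add ht, Real.rpow_neg ht.le, one_mul,
            div_eq_mul_one_div t 4, Real.mul_rpow ht.le (by norm_num)]
          have : t ^ p ≠ 0 := by positivity
          field_simp
      _ ≤ _ := by gcongr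
  set g : Euc N → ℝ≥0∞ := fun y =>
    ENNReal.ofReal (|η x - η y| ^ p / ‖x - y‖ ^ ((N : ℝ) + 1 * p)) with hg
  have hgf : ∫⁻ y, g y ≠ ∞ := by
    have := hint.lintegral_lt_top
    exact this.ne
  have hvol : ∀ t : ℝ, 0 ≤ t → volume (Metric.ball (x + t • v) (t * ρ)) =
      ENNReal.ofReal (t ^ N) * volume (Metric.ball (0 : Euc N) ρ) := by
    intro t ht
    rw [Measure.addHaar_ball_mul _ _ ht]; simp
  have hU0 : volume (Metric.ball (0 : Euc N) ρ) ≠ 0 := (Metric.measure_ball_pos _ _ hρ0).ne'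
  have hUt : volume (Metric.ball (0 : Euc N) ρ) ≠ ∞ := measure_ball_lt_top.ne
  have ht0 : Tendsto (fun t : ℝ => volume (Metric.ball (x + t • v) (t * ρ))) (𝓝[>] 0) (𝓝 0) := by
    have : Tendsto (fun t : ℝ => ENNReal.ofReal (t ^ N) * volume (Metric.ball (0 : Euc N) ρ))
        (𝓝[>] 0) (𝓝 0) := by
      have h : Tendsto (fun t : ℝ => ENNReal.ofReal (t ^ N)) (𝓝[>] 0) (𝓝 0) := by
        have h' : Continuous (fun t : ℝ => ENNReal.ofReal (t ^ N)) :=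
          ENNReal.continuous_ofReal.comp (continuous_pow N)
        have := (h'.tendsto 0).mono_left (nhdsWithin_le_nhds (s := Set.Ioi 0))
        simpa [hN.ne'] using this
      have := ENNReal.Tendsto.mul_const h (Or.inr hUt)
      simpa using this
    refine this.congr' ?_
    filter_upwards [self_mem_nhdsWithin] with t ht
    exact (hvol t (le_of_lt ht)).symm
  have hlim := tendsto_setLIntegral_zero hgf ht0
  have hlow : ∀ᶠ t : ℝ in 𝓝[>] 0, ENNReal.ofReal c * volume (Metric.ball (0 : Euc N) ρ) ≤
      ∫⁻ y in Metric.ball (x + t • v) (t * ρ), g y := by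
    filter_upwards [Ioo_mem_nhdsGT (show (0:ℝ) < r / B by positivity)] with t ht
    calc ENNReal.ofReal c * volume (Metric.ball (0 : Euc N) ρ)
        = ENNReal.ofReal (c * t ^ (-(N : ℝ))) * volume (Metric.ball (x + t • v) (t * ρ)) := by
          rw [hvol t ht.1.le, ← mul_assoc, ← ENNReal.ofReal_mul (by have := ht.1; positivity)]
          congr 2
          rw [Real.rpow_neg ht.1.le, Real.rpow_natCast]
          have := ht.1.ne'
          field_simp
      _ = ∫⁻ y in Metric.ball (x + t • v) (t * ρ), ENNReal.ofReal (c * t ^ (-(N : ℝ))) := by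
          rw [setLIntegral_const]
      _ ≤ _ := by
          refine setLIntegral_mono' measurableSet_ball fun y hy => ?_
          exact ENNReal.ofReal_le_ofReal (key t ht.1 ht.2 y hy)
  have := ge_of_tendsto hlim hlow
  simp only [nonpos_iff_eq_zero, mul_eq_zero, ENNReal.ofReal_eq_zero] at this
  rcases this with h | h
  · linarith
  · exact hU0 h

lemma dom_int (N : ℕ) (hN : 0 < N) (A B α β : ℝ) (hα : 0 < α) (hβ : 0 < β) :
    Integrable (fun x : Euc N => (fun r : ℝ => if r ≤ 1 then A * r ^ (α - N)
      else B * r ^ (-((N : ℝ) + β))) ‖x‖) := by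
  have : Nonempty (Fin N) := ⟨⟨0, hN⟩⟩
  refine (integrable_fun_norm_addHaar (E := Euc N) volume (f := fun r : ℝ =>
    if r ≤ 1 then A * r ^ (α - N) else B * r ^ (-((N : ℝ) + β)))).2 ?_
  have hcast : ((N - 1 : ℕ) : ℝ) = (N : ℝ) - 1 := by
    rw [Nat.cast_sub hN]; simp
  rw [← Set.Ioc_union_Ioi_eq_Ioi (zero_le_one' ℝ)]
  refine IntegrableOn.union ?_ ?_
  · have h : IntegrableOn (fun r : ℝ => A * r ^ (α - 1)) (Set.Ioc 0 1) := by
      rw [← intervalIntegrable_iff_integrableOn_Ioc_of_le zero_le_one]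
      exact (intervalIntegral.intervalIntegrable_rpow' (by linarith)).const_mul _
    refine h.congr_fun (fun r hr => ?_) measurableSet_Ioc
    simp only [finrank_euclideanSpace, Fintype.card_fin, smul_eq_mul, if_pos hr.2]
    rw [← Real.rpow_natCast, hcast, mul_left_comm, ← Real.rpow_add hr.1]
    congr 2; ring
  · have h : IntegrableOn (fun r : ℝ => B * r ^ (-β - 1)) (Set.Ioi 1) :=
      (integrableOn_Ioi_rpow_of_lt (by linarith) one_pos).const_mul _
    refine h.congr_fun (fun r hr => ?_) measurableSet_Ioi
    have hr' : (1:ℝ) < r := hr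
    simp only [finrank_euclideanSpace, Fintype.card_fin, smul_eq_mul, if_neg (not_le.2 hr')]
    rw [← Real.rpow_natCast, hcast, mul_left_comm, ← Real.rpow_add (by linarith)]
    congr 2; ring

lemma inner_bound (N : ℕ) (hN : 0 < N) (s p θ C M : ℝ) (hp : 1 < p) (hs : 0 < s) (hθ : s < θ)
    (hC : 0 ≤ C) :
    ∃ K : ℝ, ∀ (η : Euc N → ℝ) (x : Euc N), (∀ y, |η x - η y| ≤ C * ‖x - y‖ ^ θ) →
      (∀ y, |η x - η y| ≤ M) →
      ∫ y, |η x - η y| ^ p / ‖x - y‖ ^ ((N : ℝ) + s * p) ≤ K := by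
  have hα : 0 < (θ - s) * p := by have : 0 < θ - s := by linarith
                                  positivity
  have hβ : 0 < s * p := by positivity
  have hi := dom_int N hN (C ^ p) (M ^ p) _ _ hα hβ
  refine ⟨∫ x : Euc N, (fun r : ℝ => if r ≤ 1 then C ^ p * r ^ ((θ - s) * p - N)
      else M ^ p * r ^ (-((N : ℝ) + s * p))) ‖x‖, fun η x h1 h2 => ?_⟩
  · rw [← integral_sub_left_eq_self _ _ x]
    refine integral_mono_of_nonneg (ae_of_all _ fun y => by positivity) (hi) (ae_of_all _ fun y => ?_)
    have h1 := h1 (x - y)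
    have h2 := h2 (x - y)
    simp only [sub_sub_cancel] at h1 ⊢
    have hN' : (0:ℝ) < N := by exact_mod_cast hN
    rcases eq_or_ne y 0 with rfl | hy
    · simp only [sub_zero, sub_self, abs_zero, norm_zero, zero_le_one, if_true]
      rw [Real.zero_rpow (by linarith), zero_div]
      positivity
    have hy : 0 < ‖y‖ := norm_pos_iff.2 hy
    split_ifs with hle
    · calc |η x - η (x - y)| ^ p / ‖y‖ ^ ((N : ℝ) + s * p)
          ≤ (C * ‖y‖ ^ θ) ^ p / ‖y‖ ^ ((N : ℝ) + s * p) := by gcongr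
        _ = _ := by
          rw [Real.mul_rpow hC (by positivity), ← Real.rpow_mul hy.le, mul_div_assoc,
            ← Real.rpow_sub hy]
          congr 2; ring
    · calc |η x - η (x - y)| ^ p / ‖y‖ ^ ((N : ℝ) + s * p)
          ≤ M ^ p / ‖y‖ ^ ((N : ℝ) + s * p) := by gcongr
        _ = _ := by
          rw [Real.rpow_neg hy.le, div_eq_mul_inv]

lemma growth (N : ℕ) (hN : 0 < N) (s p : ℝ) (hp : 1 < p) (hs0 : 0 < s) (hs1 : s ≤ 1)
    (η : Euc N → ℝ) (hη : ContDiff ℝ (⊤ : ℕ∞) η) (hc : HasCompactSupport η) :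
    ∃ K : ℝ, 0 ≤ K ∧ ∀ x, ∫ y, |η x - η y| ^ p / ‖x - y‖ ^ ((N : ℝ) + s * p) ≤ K := by
  obtain ⟨M, hM⟩ := hη.continuous.bounded_above_of_compact_support hc
  have hM2 : ∀ x y, |η x - η y| ≤ 2 * M := by
    intro x y
    have h1 := hM x
    have h2 := hM y
    rw [Real.norm_eq_abs] at h1 h2
    have := abs_sub (η x) (η y)
    linarith
  rcases hs1.lt_or_eq with hs | hs
  · obtain ⟨L, hL⟩ := hη.lipschitzWith_of_hasCompactSupport hc (by simp)
    obtain ⟨K, hK⟩ := inner_bound N hN s p 1 L (2 * M) hp hs0 hs L.2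
    refine ⟨max K 0, le_max_right _ _, fun x => (hK η x (fun y => ?_) (hM2 x)).trans (le_max_left _ _)⟩
    have := hL.dist_le_mul x y
    rw [Real.rpow_one]
    rwa [Real.dist_eq, dist_eq_norm] at this
  · subst hs
    have hf : ContDiff ℝ 1 (fderiv ℝ η) := hη.fderiv_right (by norm_cast)
    obtain ⟨L, hL⟩ := hf.lipschitzWith_of_hasCompactSupport (hc.fderiv ℝ) (by simp)
    obtain ⟨K, hK⟩ := inner_bound N hN 1 p 2 L (2 * M) hp hs0 (by norm_num) L.2
    refine ⟨max K 0, le_max_right _ _, fun x => ?_⟩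
    have hdiff : Differentiable ℝ η := hη.differentiable (by simp)
    by_cases hx : fderiv ℝ η x = 0
    · refine (hK η x (fun y => ?_) (hM2 x)).trans (le_max_left _ _)
      have := (convex_closedBall x ‖x - y‖).norm_image_sub_le_of_norm_fderiv_le (𝕜 := ℝ) (f := η)
        (C := L * ‖x - y‖) (x := y) (y := x) (fun z _ => hdiff z) (fun z hz => ?_)
        (by simp [dist_eq_norm, norm_sub_rev]) (by simp)
      · rw [Real.norm_eq_abs] at this
        refine this.trans (le_of_eq ?_)
        rw [Real.rpow_two]; ring
      · have h := hL.dist_le_mul z x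
        rw [hx, dist_zero_right] at h
        refine h.trans ?_
        have hz' : dist z x ≤ ‖x - y‖ := hz
        gcongr
    · rw [integral_undef (nonint N hN p hp η x _ (hdiff x).hasFDerivAt hx)]
      exact le_max_right _ _

lemma outer_int (N : ℕ) (hN : 0 < N) (s p : ℝ) (hp : 1 < p) (hs0 : 0 < s) (hs1 : s ≤ 1)
    (η : Euc N → ℝ) (hη : ContDiff ℝ (⊤ : ℕ∞) η) (hc : HasCompactSupport η) :
    Integrable (fun x => ∫ y, |η x - η y| ^ p / ‖x - y‖ ^ ((N : ℝ) + s * p)) := by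
  obtain ⟨K, hK0, hK⟩ := growth N hN s p hp hs0 hs1 η hη hc
  have hp0 : 0 < p := by linarith
  have hsp : 0 < s * p := by positivity
  have hηc := hη.continuous
  have hint : Integrable (fun y => |η y| ^ p) := by
    refine Continuous.integrable_of_hasCompactSupport ?_ ?_
    · exact hηc.abs.rpow_const (fun _ => Or.inr hp0.le)
    · exact hc.comp_left (g := fun t : ℝ => |t| ^ p) (by simp [Real.zero_rpow hp0.ne'])
  set I := ∫ y, |η y| ^ p with hI
  have hI0 : 0 ≤ I := integral_nonneg fun y => by positivity
  obtain ⟨R, hR1, hR⟩ : ∃ R : ℝ, 1 ≤ R ∧ ∀ y, R < ‖y‖ → η y = 0 := by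
    obtain ⟨R, hR⟩ := hc.isBounded.exists_norm_le
    refine ⟨max R 1, le_max_right _ _, fun y hy => ?_⟩
    by_contra h
    have := hR y (subset_tsupport _ h)
    exact absurd ((le_max_left R 1).trans_lt hy) (not_lt.2 this)
  set q : ℝ := (N : ℝ) + s * p with hq
  have hq0 : 0 < q := by positivity
  have hdom : Integrable (fun x : Euc N => (K * (1 + 2 * R) ^ q + I * 4 ^ q) * (1 + ‖x‖) ^ (-q)) := by
    refine (integrable_one_add_norm ?_).const_mul _
    simp [hq, hsp]
  refine hdom.mono' ?_ (ae_of_all _ fun x => ?_)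
  · have hm : Measurable (Function.uncurry fun x y : Euc N => |η x - η y| ^ p / ‖x - y‖ ^ q) := by
      have := hηc.measurable
      unfold Function.uncurry
      simp only
      fun_prop
    exact (hm.stronglyMeasurable.integral_prod_right).aestronglyMeasurable
  · rw [Real.norm_of_nonneg (integral_nonneg fun y => by positivity)]
    have hx1 : 0 < 1 + ‖x‖ := by positivity
    have hR0 : 0 < 1 + 2 * R := by linarith
    rw [add_mul]
    rcases le_or_gt ‖x‖ (2 * R) with h | h
    · have h1 : K ≤ K * (1 + 2 * R) ^ q * (1 + ‖x‖) ^ (-q) := by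
        rw [mul_assoc]
        refine le_mul_of_one_le_right hK0 ?_
        rw [Real.rpow_neg hx1.le, ← div_eq_mul_inv, one_le_div (by positivity)]
        gcongr
      have h2 : 0 ≤ I * 4 ^ q * (1 + ‖x‖) ^ (-q) := by positivity
      linarith [hK x]
    · have hx0 : η x = 0 := hR x (by linarith)
      have h1 : ∫ y, |η x - η y| ^ p / ‖x - y‖ ^ q ≤ ∫ y, |η y| ^ p * (4 ^ q * (1 + ‖x‖) ^ (-q)) := by
        refine integral_mono_of_nonneg (ae_of_all _ fun y => by positivity) (hint.mul_const _)
          (ae_of_all _ fun y => ?_)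
        simp only [hx0, zero_sub, abs_neg]
        rcases le_or_gt ‖y‖ R with hy | hy
        · rw [div_eq_mul_inv]
          refine mul_le_mul_of_nonneg_left ?_ (by positivity)
          have h3 : (1 + ‖x‖) / 4 ≤ ‖x - y‖ := by
            have := norm_sub_norm_le x y
            linarith
          rw [Real.rpow_neg hx1.le, ← div_eq_mul_inv, ← inv_div, ← Real.div_rpow hx1.le (by norm_num)]
          gcongr
        · rw [hR y hy]; simp [Real.zero_rpow hp0.ne']
      rw [integral_mul_const, ← hI] at h1
      have h2 : 0 ≤ K * (1 + 2 * R) ^ q * (1 + ‖x‖) ^ (-q) := by positivity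
      linarith

/-- Proposition 2.5 (Tartar): fractional Poincaré inequality in a slab,
in its scaling-correct form. -/
theorem stmt5 (N : ℕ) (hN : 0 < N) (s p : ℝ) (hp : 1 < p) (hs0 : 0 < s) (hs1 : s ≤ 1)
    (hsp : s * p ≤ N) :
    ∃ lam : ℝ, 0 < lam ∧
      ∀ a b : ℝ, a < b →
        ∀ η : Euc N → ℝ, ContDiff ℝ (⊤ : ℕ∞) η → HasCompactSupport η →
          Function.support η ⊆ {x : Euc N | a < x ⟨0, hN⟩ ∧ x ⟨0, hN⟩ < b} →
          lam * (b - a) ^ (-(s * p)) * ∫ x, |η x| ^ p ≤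
            ∫ x, ∫ y, |η x - η y| ^ p / ‖x - y‖ ^ ((N : ℝ) + s * p) := by

  have hp0 : 0 < p := by linarith
  have hsp0 : 0 < s * p := by positivity
  set q : ℝ := (N : ℝ) + s * p with hq
  have hq0 : 0 < q := by positivity
  set V : ℝ := (volume (Metric.ball (0 : Euc N) 1)).toReal with hV
  have hV0 : 0 < V := ENNReal.toReal_pos (Metric.measure_ball_pos _ _ one_pos).ne'
    measure_ball_lt_top.ne
  refine ⟨4 ^ (-q) * V, by positivity, ?_⟩
  intro a b hab η hη hc hsupp
  have hG := outer_int N hN s p hp hs0 hs1 η hη hc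
  rw [← hq] at hG
  have hηc := hη.continuous
  have hint : Integrable (fun y => |η y| ^ p) := by
    refine Continuous.integrable_of_hasCompactSupport ?_ ?_
    · exact hηc.abs.rpow_const (fun _ => Or.inr hp0.le)
    · exact hc.comp_left (g := fun t : ℝ => |t| ^ p) (by simp [Real.zero_rpow hp0.ne'])
  obtain ⟨L, hL⟩ : ∃ L, L = b - a := ⟨_, rfl⟩
  have hL0 : 0 < L := by linarith
  rw [← hL]
  obtain ⟨e, he⟩ : ∃ e : Euc N, e = EuclideanSpace.single (⟨0, hN⟩ : Fin N) (1 : ℝ) := ⟨_, rfl⟩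
  have hen : ‖e‖ = 1 := by simp [he]
  have he0 : e ⟨0, hN⟩ = 1 := by simp [he]
  obtain ⟨B, hB⟩ : ∃ B, B = Metric.ball ((3 * L) • e) L := ⟨_, rfl⟩
  have hBm : MeasurableSet B := hB ▸ measurableSet_ball
  have hBfin : volume B ≠ ∞ := hB ▸ measure_ball_lt_top.ne
  have hBv : (volume B).toReal = L ^ N * V := by
    have : Nonempty (Fin N) := ⟨⟨0, hN⟩⟩
    rw [hB, Measure.addHaar_ball _ _ hL0.le, ENNReal.toReal_mul,
      ENNReal.toReal_ofReal (by positivity)]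
    simp [hV]
  obtain ⟨χ, hχ⟩ : ∃ χ : Euc N → ℝ, χ = B.indicator (fun _ => (4 * L) ^ (-q)) := ⟨_, rfl⟩
  have hχi : Integrable χ := by
    rw [hχ, integrable_indicator_iff hBm]
    exact integrableOn_const hBfin
  have hχI : ∫ x, χ x = (4 : ℝ) ^ (-q) * V * L ^ (-(s * p)) := by
    rw [hχ, integral_indicator hBm, setIntegral_const, Measure.real, hBv, smul_eq_mul,
      Real.mul_rpow (by norm_num) hL0.le]
    have : L ^ (-q) = L ^ (-(s*p)) * (L ^ N)⁻¹ := by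
      rw [hq, neg_add, Real.rpow_add hL0, Real.rpow_neg hL0.le (N : ℝ), Real.rpow_natCast]; ring
    rw [this]
    field_simp
  have hconv := integral_convolution (ContinuousLinearMap.mul ℝ ℝ) (μ := volume) (ν := volume)
    hint hχi
  have hconvi := hint.integrable_convolution (ContinuousLinearMap.mul ℝ ℝ) hχi
  rw [ContinuousLinearMap.mul_apply', hχI] at hconv
  rw [mul_comm, ← hconv]
  refine integral_mono hconvi hG fun x => ?_
  simp only [convolution_def, ContinuousLinearMap.mul_apply']
  have hz : ∀ y, η y = 0 → |η y| ^ p = 0 := fun y h => by simp [h, Real.zero_rpow hp0.ne']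
  have hcoord : ∀ z : Euc N, |z ⟨0, hN⟩| ≤ ‖z‖ := fun z => by
    simpa using PiLp.norm_apply_le z (⟨0, hN⟩ : Fin N)
  have hBx : ∀ y, x - y ∈ B → 2 * L < x ⟨0, hN⟩ - y ⟨0, hN⟩ ∧ ‖x - y‖ ≤ 4 * L := by
    intro y hy
    rw [hB, mem_ball, dist_eq_norm] at hy
    constructor
    · have h := (hcoord _).trans_lt hy
      simp only [PiLp.sub_apply, PiLp.smul_apply, smul_eq_mul, he0] at h
      have := (abs_lt.1 h).1
      linarith
    · have h1 : ‖x - y‖ ≤ ‖x - y - (3 * L) • e‖ + ‖(3 * L) • e‖ := by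
        simpa using norm_add_le (x - y - (3 * L) • e) ((3 * L) • e)
      rw [norm_smul, hen, Real.norm_of_nonneg (by positivity)] at h1
      linarith
  by_cases hx : b + L ≤ x ⟨0, hN⟩
  · have hηx : η x = 0 := by
      by_contra h
      have := (hsupp h).2
      linarith
    simp only [hηx, zero_sub, abs_neg]
    have hfar : ∀ y, η y ≠ 0 → L ≤ ‖x - y‖ := by
      intro y hy
      have h1 := (hsupp hy).2
      have h2 := hcoord (x - y)
      simp only [PiLp.sub_apply] at h2
      have := le_abs_self (x ⟨0, hN⟩ - y ⟨0, hN⟩)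
      linarith
    refine integral_mono_of_nonneg (ae_of_all _ fun y => ?_) ?_ (ae_of_all _ fun y => ?_)
    · have : 0 ≤ χ (x - y) := by
        rw [hχ]; exact indicator_nonneg (fun _ _ => by positivity) _
      simp only [Pi.zero_apply]; positivity
    · refine (hint.mul_const (L ^ (-q))).mono' ?_ (ae_of_all _ fun y => ?_)
      · have := hηc.measurable
        exact Measurable.aestronglyMeasurable (by fun_prop)
      · rw [Real.norm_of_nonneg (by positivity)]
        by_cases hy : η y = 0
        · rw [hz y hy]; simp
        · have := hfar y hy
          rw [div_eq_mul_inv, Real.rpow_neg hL0.le]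
          gcongr
    · simp only
      by_cases hy : η y = 0
      · rw [hz y hy]; simp
      · have h1 := hfar y hy
        have h2 : 0 < ‖x - y‖ := by linarith
        rw [div_eq_mul_inv]
        refine mul_le_mul_of_nonneg_left ?_ (by positivity)
        rw [hχ]
        by_cases hm : x - y ∈ B
        · rw [indicator_of_mem hm, Real.rpow_neg (by positivity)]
          have := (hBx y hm).2
          gcongr
        · rw [indicator_of_notMem hm]; positivity
  · have : ∀ y, |η y| ^ p * χ (x - y) = 0 := by
      intro y
      by_cases hy : η y = 0
      · rw [hz y hy, zero_mul]
      · rw [hχ, indicator_of_notMem, mul_zero]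
        intro hm
        have h1 := (hBx y hm).1
        have h2 := (hsupp hy).1
        apply hx
        linarith
    simp only [this, integral_zero]
    exact integral_nonneg fun y => by positivity

end
end

section
/- Let 0 < s < 1 and 1 < p < ∞. Then there exists C = C(s,p,N) > 0 such that for every η ∈ C_c^∞(ℝ^N): C^{-1} ‖η‖_{Ḃ^{s,p}(ℝ^N)} ≤ (∬_{Q_∞} |t^{1−s/2} ∂_t ℍ[η](x,t)|^p dx (dt/t))^{1/p} ≤ C ‖η‖_{Ḃ^{s,p}(ℝ^N)}. -/
open MeasureTheory Real Set Filter Metric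

noncomputable section

/-- heat kernel -/
def hkG (N : ℕ) (z : Euc N) (t : ℝ) : ℝ :=
  (4 * π * t) ^ (-(N : ℝ) / 2) * Real.exp (-‖z‖ ^ 2 / (4 * t))

def hkD (N : ℕ) (z : Euc N) (t : ℝ) : ℝ :=
  (‖z‖ ^ 2 / (4 * t ^ 2) - (N : ℝ) / (2 * t)) * hkG N z t

lemma hkG_pos {N : ℕ} (z : Euc N) {t : ℝ} (ht : 0 < t) : 0 < hkG N z t := by
  unfold hkG; positivity

lemma hkG_le {N : ℕ} (z : Euc N) {t : ℝ} (ht : 0 < t) :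
    hkG N z t ≤ (4 * π * t) ^ (-(N : ℝ) / 2) := by
  unfold hkG
  have : Real.exp (-‖z‖ ^ 2 / (4 * t)) ≤ 1 := by
    apply Real.exp_le_one_iff.2
    apply div_nonpos_of_nonpos_of_nonneg
    · simp
    · positivity
  have h2 : 0 ≤ (4 * π * t) ^ (-(N : ℝ) / 2) := by positivity
  nlinarith

lemma hkG_neg {N : ℕ} (z : Euc N) (t : ℝ) : hkG N (-z) t = hkG N z t := by simp [hkG]
lemma hkD_neg {N : ℕ} (z : Euc N) (t : ℝ) : hkD N (-z) t = hkD N z t := by simp [hkD, hkG_neg]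

lemma hkG_cont {N : ℕ} (t : ℝ) : Continuous (fun z : Euc N => hkG N z t) := by
  unfold hkG; fun_prop

lemma hkD_cont {N : ℕ} (t : ℝ) : Continuous (fun z : Euc N => hkD N z t) := by
  have := hkG_cont (N := N) t
  unfold hkD; fun_prop

lemma hkG_meas {N : ℕ} : Measurable (fun q : Euc N × ℝ => hkG N q.1 q.2) := by
  unfold hkG; fun_prop

lemma hkD_meas {N : ℕ} : Measurable (fun q : Euc N × ℝ => hkD N q.1 q.2) := by
  have := hkG_meas (N := N)
  unfold hkD; fun_prop

lemma hkG_integral {N : ℕ} {t : ℝ} (ht : 0 < t) : ∫ z, hkG N z t = 1 := by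
  have h := GaussianFourier.integral_rexp_neg_mul_sq_norm (V := Euc N) (b := 1 / (4 * t))
    (by positivity)
  unfold hkG
  rw [integral_const_mul]
  have e : (fun v : Euc N => Real.exp (-(1 / (4 * t)) * ‖v‖ ^ 2)) =
      fun z => Real.exp (-‖z‖ ^ 2 / (4 * t)) := by
    funext v; congr 1; ring
  rw [e] at h
  rw [h]
  have h3 : π / (1 / (4 * t)) = 4 * π * t := by field_simp
  rw [h3, ← Real.rpow_add (by positivity)]
  simp
  ring_nf
  simp

lemma hkG_int {N : ℕ} {t : ℝ} (ht : 0 < t) : Integrable (fun z => hkG N z t) := by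
  apply Integrable.of_integral_ne_zero
  rw [hkG_integral ht]; simp

lemma hkG_lint {N : ℕ} {t : ℝ} (ht : 0 < t) : ∫⁻ z, ENNReal.ofReal (hkG N z t) = 1 := by
  rw [← ofReal_integral_eq_lintegral_ofReal (hkG_int ht)
    (Eventually.of_forall fun z => (hkG_pos z ht).le), hkG_integral ht]
  simp

lemma hkG_semi {N : ℕ} {t σ : ℝ} (ht : 0 < t) (hσ : 0 < σ) (x : Euc N) :
    ∫ y, hkG N y t * hkG N (x - y) σ = hkG N x (t + σ) := by
  have key : ∀ y : Euc N, hkG N y t * hkG N (x - y) σ =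
      hkG N x (t + σ) * hkG N (y - (t / (t + σ)) • x) (t * σ / (t + σ)) := by
    intro y
    unfold hkG
    have e1 : (4 * π * t) ^ (-(N : ℝ) / 2) * (4 * π * σ) ^ (-(N : ℝ) / 2) =
       (4 * π * (t + σ)) ^ (-(N : ℝ) / 2) * (4 * π * (t * σ / (t + σ))) ^ (-(N : ℝ) / 2) := by
      rw [← Real.mul_rpow (by positivity) (by positivity),
        ← Real.mul_rpow (by positivity) (by positivity)]
      congr 1
      field_simp
    have e2 : Real.exp (-‖y‖ ^ 2 / (4 * t)) * Real.exp (-‖x - y‖ ^ 2 / (4 * σ)) =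
        Real.exp (-‖x‖ ^ 2 / (4 * (t + σ))) *
         Real.exp (-‖y - (t / (t + σ)) • x‖ ^ 2 / (4 * (t * σ / (t + σ)))) := by
      rw [← Real.exp_add, ← Real.exp_add]
      congr 1
      rw [norm_sub_sq_real, norm_sub_sq_real, inner_smul_right, norm_smul, mul_pow,
        real_inner_comm y x, Real.norm_eq_abs, sq_abs]
      field_simp
      ring
    calc _ = ((4 * π * t) ^ (-(N : ℝ) / 2) * (4 * π * σ) ^ (-(N : ℝ) / 2)) *
        (Real.exp (-‖y‖ ^ 2 / (4 * t)) * Real.exp (-‖x - y‖ ^ 2 / (4 * σ))) := by ring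
      _ = _ := by rw [e1, e2]; ring
  simp_rw [key]
  rw [integral_const_mul, integral_sub_right_eq_self (fun y => hkG N y (t * σ / (t + σ))),
    hkG_integral (by positivity), mul_one]

lemma hkG_deriv {N : ℕ} (z : Euc N) {t : ℝ} (ht : 0 < t) :
    HasDerivAt (fun τ => hkG N z τ) (hkD N z t) t := by
  have h1 : HasDerivAt (fun τ : ℝ => 4 * π * τ) (4 * π) t := by
    simpa using (hasDerivAt_id t).const_mul (4 * π)
  have h2 := h1.rpow_const (p := -(N : ℝ) / 2) (Or.inl (by positivity))
  have h3 : HasDerivAt (fun τ : ℝ => 4 * τ) 4 t := by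
    simpa using (hasDerivAt_id t).const_mul 4
  have h4 : HasDerivAt (fun τ : ℝ => -‖z‖ ^ 2 / (4 * τ)) _ t :=
    (hasDerivAt_const t (-‖z‖ ^ 2)).div h3 (by positivity)
  have h5 := h2.mul h4.exp
  unfold hkG hkD hkG
  convert! h5 using 1
  rw [Real.rpow_sub_one (by positivity)]
  field_simp
  ring

lemma hk_exp_bd (u : ℝ) : u * Real.exp (-u) ≤ 2 * Real.exp (-(u / 2)) := by
  have h1 : u / 2 ≤ Real.exp (u / 2) := by linarith [Real.add_one_le_exp (u / 2)]
  have h2 : Real.exp (-u) = Real.exp (-(u / 2)) * Real.exp (-(u / 2)) := by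
    rw [← Real.exp_add]; congr 1; ring
  have h3 : Real.exp (u / 2) * Real.exp (-(u / 2)) = 1 := by rw [← Real.exp_add]; simp
  have h4 := Real.exp_pos (-(u / 2))
  rw [h2]
  nlinarith [mul_le_mul_of_nonneg_right h1 h4.le]

lemma hkG_two {N : ℕ} (z : Euc N) {t : ℝ} (ht : 0 < t) :
    (4 * π * t) ^ (-(N : ℝ) / 2) * Real.exp (-(‖z‖ ^ 2 / (4 * t) / 2))
      = 2 ^ ((N : ℝ) / 2) * hkG N z (2 * t) := by
  unfold hkG
  have : 4 * π * (2 * t) = 2 * (4 * π * t) := by ring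
  rw [this, Real.mul_rpow (x := 2) (y := 4 * π * t) (by norm_num) (by positivity)]
  have h2 : (2 : ℝ) ^ ((N : ℝ) / 2) * 2 ^ (-(N : ℝ) / 2) = 1 := by
    rw [← Real.rpow_add (by norm_num)]; ring_nf; simp
  have e : -(‖z‖ ^ 2 / (4 * t) / 2) = -‖z‖ ^ 2 / (4 * (2 * t)) := by field_simp
  rw [e]
  calc _ = (2 : ℝ) ^ ((N : ℝ) / 2) * 2 ^ (-(N : ℝ) / 2) * ((4 * π * t) ^ (-(N : ℝ) / 2) * rexp (-‖z‖ ^ 2 / (4 * (2 * t)))) := by rw [h2]; ring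
    _ = _ := by ring

lemma hkG_sq {N : ℕ} (z : Euc N) {t : ℝ} (ht : 0 < t) :
    ‖z‖ ^ 2 / (4 * t) * hkG N z t ≤ 2 * 2 ^ ((N : ℝ) / 2) * hkG N z (2 * t) := by
  have h1 := hk_exp_bd (‖z‖ ^ 2 / (4 * t))
  have h2 := hkG_two z ht
  have h3 : 0 < (4 * π * t) ^ (-(N : ℝ) / 2) := by positivity
  have h4 : hkG N z t = (4 * π * t) ^ (-(N : ℝ) / 2) * Real.exp (-(‖z‖ ^ 2 / (4 * t))) := by
    unfold hkG; rw [neg_div (4 * t)]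
  rw [h4, mul_assoc 2, ← h2]
  nlinarith [mul_le_mul_of_nonneg_left h1 h3.le]

lemma hkG_le_two {N : ℕ} (z : Euc N) {t : ℝ} (ht : 0 < t) :
    hkG N z t ≤ 2 ^ ((N : ℝ) / 2) * hkG N z (2 * t) := by
  have h2 := hkG_two z ht
  rw [← h2]
  unfold hkG
  gcongr
  have : 0 ≤ ‖z‖ ^ 2 / (4 * t) := by positivity
  rw [neg_div]
  linarith

def hkc (N : ℕ) : ℝ := (2 + (N : ℝ)) * 2 ^ ((N : ℝ) / 2)
lemma hkc_pos (N : ℕ) : 0 < hkc N := by unfold hkc; positivity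

lemma hkD_bd {N : ℕ} (z : Euc N) {t : ℝ} (ht : 0 < t) :
    |hkD N z t| ≤ hkc N / t * hkG N z (2 * t) := by
  have h1 := hkG_sq z ht
  have h2 := hkG_le_two z ht
  have h3 := hkG_pos z ht
  have h5 := hkG_pos z (t := 2 * t) (by positivity)
  have h4 : |hkD N z t| ≤ (‖z‖ ^ 2 / (4 * t ^ 2) + (N : ℝ) / (2 * t)) * hkG N z t := by
    unfold hkD
    rw [abs_mul, abs_of_pos h3]
    gcongr
    refine (abs_sub _ _).trans ?_
    rw [abs_of_nonneg (by positivity), abs_of_nonneg (by positivity)]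
  refine h4.trans ?_
  have e1 : (‖z‖ ^ 2 / (4 * t ^ 2) + (N : ℝ) / (2 * t)) * hkG N z t =
     (1 / t) * (‖z‖ ^ 2 / (4 * t) * hkG N z t + N / 2 * hkG N z t) := by field_simp
  have e2 : hkc N / t * hkG N z (2 * t) = (1 / t) * (2 * 2 ^ ((N : ℝ) / 2) * hkG N z (2 * t) +
    N * (2 ^ ((N : ℝ) / 2) * hkG N z (2 * t))) := by
    unfold hkc; ring
  rw [e1, e2]
  gcongr
  have : (0 : ℝ) ≤ N := by positivity
  linarith

lemma hkD_bd' {N : ℕ} (z : Euc N) {t τ : ℝ} (ht : 0 < t) (h : t ≤ τ) :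
    |hkD N z τ| ≤ hkc N / t * (4 * π * (2 * t)) ^ (-(N : ℝ) / 2) := by
  have hτ : 0 < τ := ht.trans_le h
  refine (hkD_bd z hτ).trans ?_
  have := hkc_pos N
  refine mul_le_mul (by gcongr) ((hkG_le z (by positivity)).trans ?_) (hkG_pos _ (by positivity)).le
    (by positivity)
  apply Real.rpow_le_rpow_of_nonpos (by positivity) (by gcongr)
  have : (0 : ℝ) ≤ N := by positivity
  linarith

lemma hkG_norm {N : ℕ} (z : Euc N) {t : ℝ} (ht : 0 < t) :
    ‖z‖ * hkG N z t ≤ hkc N * 5 * √t * hkG N z (2 * t) := by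
  have h1 := hkG_sq z ht
  have h2 := hkG_le_two z ht
  have h3 := hkG_pos z ht
  have h5 := hkG_pos z (t := 2 * t) (by positivity)
  have hs : 0 < √t := by positivity
  have hst : √t * √t = t := Real.mul_self_sqrt ht.le
  have h6 : ‖z‖ ≤ √t * (1 + 4 * (‖z‖ ^ 2 / (4 * t))) := by
    have e : √t * (1 + 4 * (‖z‖ ^ 2 / (4 * t))) = √t + ‖z‖ ^ 2 / √t := by
      have : ‖z‖ ^ 2 / √t = √t * (‖z‖ ^ 2 / t) := by
        rw [eq_comm, mul_div_assoc', div_eq_div_iff ht.ne' hs.ne']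
        nth_rw 3 [← hst]
        ring
      rw [this]; field_simp
    rw [e]
    have : √t + ‖z‖ ^ 2 / √t - ‖z‖ = ((√t - ‖z‖/2) ^ 2 + 3 / 4 * ‖z‖ ^ 2) / √t := by
      field_simp; ring
    have h7 : 0 ≤ ((√t - ‖z‖/2) ^ 2 + 3 / 4 * ‖z‖ ^ 2) / √t := by positivity
    linarith
  calc ‖z‖ * hkG N z t ≤ √t * (1 + 4 * (‖z‖ ^ 2 / (4 * t))) * hkG N z t := by gcongr
    _ = √t * (hkG N z t + 4 * (‖z‖ ^ 2 / (4 * t) * hkG N z t)) := by ring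
    _ ≤ √t * (2 ^ ((N : ℝ) / 2) * hkG N z (2 * t) +
        4 * (2 * 2 ^ ((N : ℝ) / 2) * hkG N z (2 * t))) := by gcongr
    _ ≤ _ := by
      have hN : (0 : ℝ) ≤ N := by positivity
      have h8 : 0 ≤ √t * (2 ^ ((N : ℝ) / 2) * hkG N z (2 * t)) := by positivity
      unfold hkc
      nlinarith [mul_nonneg hN h8]

lemma hkE_int {N : ℕ} {t : ℝ} (ht : 0 < t) :
    Integrable (fun z : Euc N => Real.exp (-‖z‖ ^ 2 / (4 * t))) := by
  have h := (hkG_int (N := N) ht).const_mul ((4 * π * t) ^ (-(N : ℝ) / 2))⁻¹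
  refine h.congr (Eventually.of_forall fun z => ?_)
  have h3 : (4 * π * t) ^ (-(N : ℝ) / 2) ≠ 0 := by positivity
  simp only [hkG]
  field_simp

lemma hkD_integral {N : ℕ} {t : ℝ} (ht : 0 < t) :
    Integrable (fun z => hkD N z t) ∧ ∫ z, hkD N z t = 0 := by
  have h := hasDerivAt_integral_of_dominated_loc_of_deriv_le (μ := (volume : Measure (Euc N)))
    (F := fun τ z => hkG N z τ) (F' := fun τ z => hkD N z τ) (x₀ := t) (s := Ioo (t / 2) (2 * t))
    (bound := fun z => hkc N / (t / 2) * ((4 * π * t) ^ (-(N : ℝ) / 2) *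
      Real.exp (-‖z‖ ^ 2 / (4 * (4 * t)))))
    (Ioo_mem_nhds (by linarith) (by linarith))
    (Eventually.of_forall fun τ => (hkG_cont τ).aestronglyMeasurable) (hkG_int ht)
    (hkD_cont t).aestronglyMeasurable
    (Eventually.of_forall fun z τ hτ => by
      have hτ0 : 0 < τ := by linarith [hτ.1]
      refine (hkD_bd z hτ0).trans ?_
      have := hkc_pos N
      have hN : (0 : ℝ) ≤ N := by positivity
      unfold hkG
      refine mul_le_mul ?_ (mul_le_mul ?_ ?_ (by positivity) (by positivity)) (by positivity)
        (by positivity)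
      · gcongr; exact hτ.1.le
      · refine Real.rpow_le_rpow_of_nonpos (by positivity) ?_ (by linarith)
        have := Real.pi_pos
        have h9 := hτ.1
        nlinarith
      · apply Real.exp_le_exp.2
        rw [neg_div, neg_div]
        apply neg_le_neg
        apply div_le_div_of_nonneg_left (by positivity) (by positivity)
        linarith [hτ.2])
    (((hkE_int (by positivity)).const_mul _).const_mul _)
    (Eventually.of_forall fun z τ hτ => hkG_deriv z (by linarith [hτ.1]))
  refine ⟨h.1, ?_⟩
  have h2 : HasDerivAt (fun τ => ∫ z, hkG N z τ) 0 t := by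
    refine (hasDerivAt_const t (1 : ℝ)).congr_of_eventuallyEq ?_
    filter_upwards [Ioi_mem_nhds ht] with τ hτ using hkG_integral hτ
  exact h.2.unique h2

def hkW (N : ℕ) (η : Euc N → ℝ) (x : Euc N) (t : ℝ) : ℝ := ∫ y, hkD N (x - y) t * η y

lemma heatPot_eq {N : ℕ} (η : Euc N → ℝ) (x : Euc N) (t : ℝ) :
    heatPot N η x t = ∫ y, hkG N (x - y) t * η y := rfl

lemma heatPot_deriv {N : ℕ} {η : Euc N → ℝ} (hi : Integrable η) (x : Euc N) {t : ℝ}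
    (ht : 0 < t) : HasDerivAt (fun τ => heatPot N η x τ) (hkW N η x t) t := by
  have hg : ∀ τ, Continuous fun y => hkG N (x - y) τ := fun τ => (hkG_cont τ).comp (by fun_prop)
  have hd : ∀ τ, Continuous fun y => hkD N (x - y) τ := fun τ => (hkD_cont τ).comp (by fun_prop)
  have h := hasDerivAt_integral_of_dominated_loc_of_deriv_le (μ := (volume : Measure (Euc N)))
    (F := fun τ y => hkG N (x - y) τ * η y) (F' := fun τ y => hkD N (x - y) τ * η y) (x₀ := t)
    (s := Ioi (t / 2))
    (bound := fun y => hkc N / (t / 2) * (4 * π * (2 * (t / 2))) ^ (-(N : ℝ) / 2) * |η y|)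
    (Ioi_mem_nhds (by linarith))
    (Eventually.of_forall fun τ => (hg τ).aestronglyMeasurable.mul hi.1)
    (hi.bdd_mul (c := (4 * π * t) ^ (-(N : ℝ) / 2)) (hg t).aestronglyMeasurable
      (Eventually.of_forall fun y => by
        rw [Real.norm_eq_abs, abs_of_pos (hkG_pos _ ht)]; exact hkG_le _ ht))
    ((hd t).aestronglyMeasurable.mul hi.1)
    (Eventually.of_forall fun y τ hτ => by
      rw [norm_mul, Real.norm_eq_abs, Real.norm_eq_abs]
      gcongr
      exact hkD_bd' _ (by linarith) (le_of_lt hτ))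
    (hi.abs.const_mul _)
    (Eventually.of_forall fun y τ hτ =>
      (hkG_deriv _ (lt_trans (by linarith) (show t / 2 < τ from hτ))).mul_const _)
  exact h.2

lemma hkW_bd {N : ℕ} {η : Euc N → ℝ} (hi : Integrable η) (x : Euc N) {t τ : ℝ}
    (ht : 0 < t) (h : t ≤ τ) :
    |hkW N η x τ| ≤ hkc N / t * (4 * π * (2 * t)) ^ (-(N : ℝ) / 2) * ∫ y, |η y| := by
  unfold hkW
  rw [← integral_const_mul, ← Real.norm_eq_abs]
  refine norm_integral_le_of_norm_le (hi.abs.const_mul _) (Eventually.of_forall fun y => ?_)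
  rw [norm_mul, Real.norm_eq_abs, Real.norm_eq_abs]
  gcongr
  exact hkD_bd' _ ht h

lemma hkW_meas {N : ℕ} {η : Euc N → ℝ} (hm : Measurable η) :
    Measurable (fun q : Euc N × ℝ => hkW N η q.1 q.2) := by
  unfold hkW
  have h : StronglyMeasurable (fun q : (Euc N × ℝ) × Euc N =>
      hkD N (q.1.1 - q.2) q.1.2 * η q.2) := by
    apply Measurable.stronglyMeasurable
    apply Measurable.mul
    · exact hkD_meas.comp (f := fun q : (Euc N × ℝ) × Euc N => (q.1.1 - q.2, q.1.2))
        (by fun_prop)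
    · fun_prop
  exact h.integral_prod_right.measurable

lemma heatPot_meas {N : ℕ} {η : Euc N → ℝ} (hm : Measurable η) (t : ℝ) :
    Measurable (fun x : Euc N => heatPot N η x t) := by
  simp_rw [heatPot_eq]
  have h : StronglyMeasurable (fun q : Euc N × Euc N => hkG N (q.1 - q.2) t * η q.2) := by
    apply Measurable.stronglyMeasurable
    apply Measurable.mul
    · exact hkG_meas.comp (f := fun q : Euc N × Euc N => (q.1 - q.2, t))
        (by fun_prop)
    · fun_prop
  exact h.integral_prod_right.measurable

lemma heatPot_bd {N : ℕ} {η : Euc N → ℝ} (hi : Integrable η) (x : Euc N) {t : ℝ}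
    (ht : 0 < t) :
    |heatPot N η x t| ≤ (4 * π * t) ^ (-(N : ℝ) / 2) * ∫ y, |η y| := by
  rw [heatPot_eq, ← integral_const_mul, ← Real.norm_eq_abs]
  refine norm_integral_le_of_norm_le (hi.abs.const_mul _) (Eventually.of_forall fun y => ?_)
  rw [norm_mul, Real.norm_eq_abs, Real.norm_eq_abs, abs_of_pos (hkG_pos _ ht)]
  gcongr
  exact hkG_le _ ht

lemma heatPot_semi {N : ℕ} {η : Euc N → ℝ} (hi : Integrable η) (x : Euc N) {t σ : ℝ}
    (ht : 0 < t) (hσ : 0 < σ) :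
    heatPot N η x (t + σ) = ∫ y, hkG N y t * heatPot N η (x - y) σ := by
  simp_rw [heatPot_eq, ← integral_const_mul]
  rw [integral_integral_swap]
  · congr 1
    funext u
    rw [← hkG_semi ht hσ, ← integral_mul_const]
    congr 1
    funext y
    rw [show x - u - y = x - y - u by abel]
    ring
  · have h1 := (hkG_int (N := N) ht).mul_prod hi
    have h2 := h1.bdd_mul (c := (4 * π * σ) ^ (-(N : ℝ) / 2))
      (f := fun q : Euc N × Euc N => hkG N (x - q.1 - q.2) σ)
      (((hkG_cont σ).comp (by fun_prop)).aestronglyMeasurable)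
      (Eventually.of_forall fun y => by
        rw [Real.norm_eq_abs, abs_of_pos (hkG_pos _ hσ)]; exact hkG_le _ hσ)
    refine h2.congr (Eventually.of_forall fun q => ?_)
    simp only [Function.uncurry]
    ring

lemma hkW_semi {N : ℕ} {η : Euc N → ℝ} (hi : Integrable η) (hm : Measurable η) (x : Euc N)
    {t σ : ℝ} (ht : 0 < t) (hσ : 0 < σ) :
    hkW N η x (t + σ) = ∫ y, hkG N y t * hkW N η (x - y) σ := by
  have hw : Measurable fun y => hkW N η (x - y) σ :=
    (hkW_meas hm).comp (f := fun y => (x - y, σ)) (by fun_prop)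
  have hh : ∀ τ, Measurable fun y => heatPot N η (x - y) τ := fun τ =>
    (heatPot_meas hm τ).comp (f := fun y => x - y) (by fun_prop)
  have h := hasDerivAt_integral_of_dominated_loc_of_deriv_le (μ := (volume : Measure (Euc N)))
    (F := fun τ y => hkG N y t * heatPot N η (x - y) τ)
    (F' := fun τ y => hkG N y t * hkW N η (x - y) τ) (x₀ := σ)
    (s := Ioi (σ / 2))
    (bound := fun y => hkG N y t *
      (hkc N / (σ / 2) * (4 * π * (2 * (σ / 2))) ^ (-(N : ℝ) / 2) * ∫ y, |η y|))
    (Ioi_mem_nhds (by linarith))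
    (Eventually.of_forall fun τ => (hkG_cont t).aestronglyMeasurable.mul
      (hh τ).aestronglyMeasurable)
    ((hkG_int ht).mul_bdd (hh σ).aestronglyMeasurable
      (Eventually.of_forall fun y => heatPot_bd hi _ hσ))
    ((hkG_cont t).aestronglyMeasurable.mul hw.aestronglyMeasurable)
    (Eventually.of_forall fun y τ hτ => by
      rw [norm_mul, Real.norm_eq_abs, Real.norm_eq_abs, abs_of_pos (hkG_pos _ ht)]
      have := hkG_pos y ht
      gcongr
      exact hkW_bd hi _ (by linarith) (le_of_lt hτ))
    ((hkG_int ht).mul_const _)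
    (Eventually.of_forall fun y τ hτ =>
      (heatPot_deriv hi _ (lt_trans (by linarith) (show σ / 2 < τ from hτ))).const_mul _)
  have h2 : HasDerivAt (fun τ => heatPot N η x (t + τ)) (hkW N η x (t + σ)) σ := by
    have := (heatPot_deriv hi x (t := t + σ) (by linarith)).comp_const_add t σ
    exact this
  have h3 : HasDerivAt (fun τ => heatPot N η x (t + τ))
    (∫ y, hkG N y t * hkW N η (x - y) σ) σ := by
    refine h.2.congr_of_eventuallyEq ?_
    filter_upwards [Ioi_mem_nhds hσ] with τ hτ using heatPot_semi hi x ht hτ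
  exact h2.unique h3

lemma hkW_diff {N : ℕ} {η : Euc N → ℝ} (hi : Integrable η) (hm : Measurable η) (x h : Euc N)
    {σ : ℝ} (hσ : 0 < σ) :
    hkW N η (x + h) (2 * σ) - hkW N η x (2 * σ) =
      ∫ y, (hkG N (y + h) σ - hkG N y σ) * hkW N η (x - y) σ := by
  have hw : Measurable fun y => hkW N η (x - y) σ :=
    (hkW_meas hm).comp (f := fun y => (x - y, σ)) (by fun_prop)
  rw [two_mul, hkW_semi hi hm _ hσ hσ, hkW_semi hi hm _ hσ hσ,
    ← integral_add_right_eq_self _ h, ← integral_sub]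
  · congr 1
    funext y
    rw [show x + h - (y + h) = x - y by abel]
    ring
  · simp_rw [show ∀ y, x + h - (y + h) = x - y from fun y => by abel]
    exact ((hkG_int hσ).comp_add_right h).mul_bdd hw.aestronglyMeasurable
      (Eventually.of_forall fun y => hkW_bd hi _ hσ le_rfl)
  · exact (hkG_int hσ).mul_bdd hw.aestronglyMeasurable
      (Eventually.of_forall fun y => hkW_bd hi _ hσ le_rfl)

lemma heatPot_zero {N : ℕ} {η : Euc N → ℝ} (hc : Continuous η) (hi : Integrable η) {L : NNReal}
    (hL : LipschitzWith L η) (x : Euc N) :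
    Tendsto (fun t => heatPot N η x t) (nhdsWithin 0 (Ioi 0)) (nhds (η x)) := by
  have hb : ∀ t > 0, ‖heatPot N η x t - η x‖ ≤ L * (hkc N * 5 * √t) := by
    intro t ht
    have hg : Continuous fun y => hkG N (x - y) t := (hkG_cont t).comp (by fun_prop)
    have i1 : Integrable (fun y => hkG N (x - y) t * η y) :=
      hi.bdd_mul (c := (4 * π * t) ^ (-(N : ℝ) / 2)) hg.aestronglyMeasurable
      (Eventually.of_forall fun y => by
        rw [Real.norm_eq_abs, abs_of_pos (hkG_pos _ ht)]; exact hkG_le _ ht)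
    have i2 : Integrable (fun y => hkG N (x - y) t) := (hkG_int ht).comp_sub_left x
    have e : η x = ∫ y, hkG N (x - y) t * η x := by
      rw [integral_mul_const, integral_sub_left_eq_self (fun y => hkG N y t), hkG_integral ht,
        one_mul]
    have e2 : (L : ℝ) * (hkc N * 5 * √t) =
        ∫ y, L * (hkc N * 5 * √t) * hkG N (x - y) (2 * t) := by
      rw [integral_const_mul, integral_sub_left_eq_self (fun y => hkG N y (2 * t)),
        hkG_integral (by positivity), mul_one]
    nth_rw 1 [e]
    rw [heatPot_eq, ← integral_sub i1 (i2.mul_const _), e2]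
    refine norm_integral_le_of_norm_le
      (((hkG_int (by positivity)).comp_sub_left x).const_mul _) (Eventually.of_forall fun y => ?_)
    rw [← mul_sub, norm_mul, Real.norm_eq_abs, abs_of_pos (hkG_pos _ ht)]
    have h1 : ‖η y - η x‖ ≤ L * ‖x - y‖ := by
      rw [← dist_eq_norm, ← dist_eq_norm, dist_comm x y]; exact hL.dist_le_mul y x
    have h2 := hkG_norm (x - y) ht
    have h3 := hkG_pos (x - y) ht
    calc _ ≤ hkG N (x - y) t * (L * ‖x - y‖) := by gcongr
      _ = L * (‖x - y‖ * hkG N (x - y) t) := by ring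
      _ ≤ L * (hkc N * 5 * √t * hkG N (x - y) (2 * t)) := by gcongr
      _ = _ := by ring
  rw [tendsto_iff_norm_sub_tendsto_zero]
  refine squeeze_zero' (Eventually.of_forall fun _ => norm_nonneg _)
    (eventually_nhdsWithin_of_forall hb) ?_
  have : Continuous fun t : ℝ => (L : ℝ) * (hkc N * 5 * √t) := by fun_prop
  have h0 := this.tendsto 0
  simp only [Real.sqrt_zero, mul_zero] at h0
  exact h0.mono_left nhdsWithin_le_nhds

lemma heatPot_top {N : ℕ} (hN : 0 < N) {η : Euc N → ℝ} (hi : Integrable η) (x : Euc N) :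
    Tendsto (fun t => heatPot N η x t) atTop (nhds 0) := by
  have h1 : Tendsto (fun t : ℝ => (4 * π * t) ^ (-(N : ℝ) / 2) * ∫ y, |η y|) atTop (nhds 0) := by
    have h2 : Tendsto (fun t : ℝ => 4 * π * t) atTop atTop :=
      tendsto_id.const_mul_atTop (by positivity)
    have h3 := (tendsto_rpow_neg_atTop (y := (N : ℝ) / 2) (by positivity)).comp h2
    have h4 := h3.mul_const (∫ y, |η y|)
    simp only [zero_mul] at h4
    refine h4.congr fun t => ?_
    simp [neg_div]
  refine squeeze_zero_norm' ?_ h1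
  filter_upwards [eventually_gt_atTop 0] with t ht using heatPot_bd hi x ht

lemma eta_diff_le {N : ℕ} (hN : 0 < N) {η : Euc N → ℝ} (hc : Continuous η) (hi : Integrable η)
    {L : NNReal} (hL : LipschitzWith L η) (x h : Euc N) :
    ENNReal.ofReal |η (x + h) - η x| ≤ 2 * ∫⁻ σ in Ioi (0 : ℝ),
      ENNReal.ofReal |hkW N η (x + h) (2 * σ) - hkW N η x (2 * σ)| := by
  set f : ℝ → ℝ := Function.update (fun σ => heatPot N η (x + h) (2 * σ) - heatPot N η x (2 * σ)) 0
    (η (x + h) - η x) with hf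
  set f' : ℝ → ℝ := fun σ => 2 * (hkW N η (x + h) (2 * σ) - hkW N η x (2 * σ)) with hf'
  have hfne : ∀ σ, 0 < σ → f σ = heatPot N η (x + h) (2 * σ) - heatPot N η x (2 * σ) := by
    intro σ hσ; rw [hf, Function.update_of_ne hσ.ne']
  have hm2 : ∀ z, Measurable fun σ : ℝ => hkW N η z (2 * σ) := fun z =>
    (hkW_meas hc.measurable).comp (f := fun σ : ℝ => (z, 2 * σ)) (by fun_prop)
  have hfm : Measurable f' := ((hm2 _).sub (hm2 _)).const_mul 2
  have hd : ∀ σ ∈ Ioi (0 : ℝ), HasDerivAt f (f' σ) σ := by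
    intro σ hσ
    have hσ' : (0 : ℝ) < σ := hσ
    have h2 : HasDerivAt (fun σ : ℝ => 2 * σ) 2 σ := by
      simpa using (hasDerivAt_id σ).const_mul 2
    have h1 : ∀ z, HasDerivAt (fun σ : ℝ => heatPot N η z (2 * σ)) (hkW N η z (2 * σ) * 2) σ :=
      fun z => (heatPot_deriv hi z (t := 2 * σ) (by positivity)).comp σ h2
    have h3 := (h1 (x + h)).sub (h1 x)
    have e : hkW N η (x + h) (2 * σ) * 2 - hkW N η x (2 * σ) * 2 = f' σ := by
      rw [hf']; ring
    rw [e] at h3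
    refine h3.congr_of_eventuallyEq ?_
    filter_upwards [Ioi_mem_nhds hσ'] with τ hτ using hfne τ hτ
  have hcont : ContinuousWithinAt f (Ici 0) 0 := by
    rw [hf, continuousWithinAt_update_same]
    have e : Ici (0 : ℝ) \ {0} = Ioi 0 := by simp
    rw [e]
    have h2 : Tendsto (fun σ : ℝ => 2 * σ) (nhdsWithin 0 (Ioi 0)) (nhdsWithin 0 (Ioi 0)) := by
      refine tendsto_nhdsWithin_iff.2 ⟨?_, ?_⟩
      · have : Continuous fun σ : ℝ => 2 * σ := by fun_prop
        have h0 := this.tendsto 0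
        simp only [mul_zero] at h0
        exact h0.mono_left nhdsWithin_le_nhds
      · filter_upwards [self_mem_nhdsWithin] with σ hσ
        have : (0 : ℝ) < σ := hσ
        simp [this]
    exact ((heatPot_zero hc hi hL (x + h)).comp h2).sub ((heatPot_zero hc hi hL x).comp h2)
  have htop : Tendsto f atTop (nhds 0) := by
    have h2 : Tendsto (fun t : ℝ => 2 * t) atTop atTop :=
      tendsto_id.const_mul_atTop (by positivity)
    have h3 := ((heatPot_top hN hi (x + h)).comp h2).sub ((heatPot_top hN hi x).comp h2)
    simp only [sub_zero] at h3
    refine h3.congr' ?_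
    filter_upwards [eventually_gt_atTop 0] with σ hσ using (hfne σ hσ).symm
  have e1 : 2 * ∫⁻ σ in Ioi (0 : ℝ),
      ENNReal.ofReal |hkW N η (x + h) (2 * σ) - hkW N η x (2 * σ)| =
      ∫⁻ σ in Ioi (0 : ℝ), ‖f' σ‖ₑ := by
    rw [← lintegral_const_mul' _ _ (by simp)]
    congr 1
    funext σ
    rw [hf', ← ofReal_norm, norm_mul, ENNReal.ofReal_mul (by positivity)]
    simp
  rw [e1]
  by_cases hfin : ∫⁻ σ in Ioi (0 : ℝ), ‖f' σ‖ₑ = ⊤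
  · rw [hfin]; exact le_top
  · have hint : IntegrableOn f' (Ioi 0) :=
      ⟨hfm.aestronglyMeasurable, lt_top_iff_ne_top.2 hfin⟩
    have hI := integral_Ioi_of_hasDerivAt_of_tendsto hcont hd hint htop
    have h0 : f 0 = η (x + h) - η x := by rw [hf]; simp
    rw [h0, zero_sub] at hI
    have h5 := enorm_integral_le_lintegral_enorm (μ := volume.restrict (Ioi (0 : ℝ))) f'
    rw [hI, enorm_neg, ← ofReal_norm, Real.norm_eq_abs] at h5
    exact h5

lemma hk_T0 {a b c₁ c₂ R : ℝ} {f : ℝ → ℝ} (ha : -1 < a) (hb : b < -1) (h1 : 0 ≤ c₁) (h2 : 0 ≤ c₂)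
    (hR : 0 < R) (hf1 : ∀ t, 0 < t → t ≤ R → f t ≤ c₁ * t ^ a)
    (hf2 : ∀ t, R < t → f t ≤ c₂ * t ^ b) :
    ∫⁻ t in Ioi (0 : ℝ), ENNReal.ofReal (f t) ≤
      ENNReal.ofReal (c₁ * (R ^ (a + 1) / (a + 1)) + c₂ * (R ^ (b + 1) / -(b + 1))) := by
  rw [← Ioc_union_Ioi_eq_Ioi hR.le]
  refine (lintegral_union_le _ _ _).trans ?_
  have hb' : 0 < -(b + 1) := by linarith
  have ha' : 0 < a + 1 := by linarith
  rw [ENNReal.ofReal_add (by positivity) (by positivity)]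
  gcongr
  · have hi : IntegrableOn (fun t : ℝ => t ^ a) (Ioc 0 R) := by
      have := intervalIntegral.intervalIntegrable_rpow' (a := 0) (b := R) ha
      rwa [intervalIntegrable_iff_integrableOn_Ioc_of_le hR.le] at this
    calc _ ≤ ∫⁻ t in Ioc (0 : ℝ) R, ENNReal.ofReal (c₁ * t ^ a) := by
          refine setLIntegral_mono' measurableSet_Ioc fun t ht => ?_
          exact ENNReal.ofReal_le_ofReal (hf1 t ht.1 ht.2)
      _ = ENNReal.ofReal (∫ t in Ioc (0 : ℝ) R, c₁ * t ^ a) := by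
          rw [ofReal_integral_eq_lintegral_ofReal (hi.const_mul _)]
          refine (ae_restrict_iff' measurableSet_Ioc).2 (Eventually.of_forall fun t ht => ?_)
          have := ht.1
          positivity
      _ ≤ _ := by
          rw [integral_const_mul, ← intervalIntegral.integral_of_le hR.le,
            integral_rpow (Or.inl ha), Real.zero_rpow ha'.ne', sub_zero]
  · have hi : IntegrableOn (fun t : ℝ => t ^ b) (Ioi R) := integrableOn_Ioi_rpow_of_lt hb hR
    calc _ ≤ ∫⁻ t in Ioi R, ENNReal.ofReal (c₂ * t ^ b) := by
          refine setLIntegral_mono' measurableSet_Ioi fun t ht => ?_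
          exact ENNReal.ofReal_le_ofReal (hf2 t ht)
      _ = ENNReal.ofReal (∫ t in Ioi R, c₂ * t ^ b) := by
          rw [ofReal_integral_eq_lintegral_ofReal (hi.const_mul _)]
          refine (ae_restrict_iff' measurableSet_Ioi).2 (Eventually.of_forall fun t ht => ?_)
          have : 0 < t := hR.trans ht
          positivity
      _ ≤ _ := by
          rw [integral_const_mul, integral_Ioi_rpow_of_lt hb hR, div_neg, neg_div]

/-- the time integral of the kernel -/
lemma hk_time (N : ℕ) {a : ℝ} (ha : 0 < a) : ∃ C : ℝ, 0 < C ∧ ∀ z : Euc N, z ≠ 0 →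
    ∫⁻ t in Ioi (0 : ℝ), ENNReal.ofReal (t ^ (-a - 1) * hkG N z (2 * t)) ≤
      ENNReal.ofReal (C / ‖z‖ ^ ((N : ℝ) + 2 * a)) := by
  have hN : (0 : ℝ) ≤ N := by positivity
  set k : ℝ := (N : ℝ) / 2 + a + 1 with hk
  have hk0 : 0 < k := by positivity
  obtain ⟨m, hm⟩ := exists_nat_ge k
  -- u^k exp(-u/8) bounded
  have hE : ∀ u : ℝ, 1 ≤ u → Real.exp (-(u / 8)) ≤ (8 ^ m * m.factorial) * u ^ (-k) := by
    intro u hu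
    have hu0 : 0 < u := by linarith
    have h1 := Real.pow_div_factorial_le_exp (u / 8) (by positivity) m
    have h2 : u ^ k ≤ u ^ m := by
      rw [← Real.rpow_natCast]; exact Real.rpow_le_rpow_of_exponent_le hu hm
    rw [Real.exp_neg, Real.rpow_neg hu0.le, inv_le_comm₀ (by positivity) (by positivity)]
    refine le_trans ?_ h1
    rw [mul_inv, inv_inv, div_pow, mul_inv]
    have : (8 ^ m : ℝ)⁻¹ * (m.factorial : ℝ)⁻¹ * u ^ k ≤ (8 ^ m : ℝ)⁻¹ * (m.factorial : ℝ)⁻¹ * u ^ m := by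
      gcongr
    refine this.trans (le_of_eq ?_)
    field_simp
  set c0 : ℝ := (8 * π) ^ (-(N : ℝ) / 2) with hc0
  have hc0' : 0 < c0 := by positivity
  set M : ℝ := 8 ^ m * m.factorial with hM
  have hM0 : 0 < M := by positivity
  refine ⟨c0 * M + c0 * (1 / (a + N / 2)), by positivity, fun z hz => ?_⟩
  set r := ‖z‖ with hr
  have hr0 : 0 < r := norm_pos_iff.2 hz
  have hG : ∀ t, 0 < t → hkG N z (2 * t) = c0 * t ^ (-(N : ℝ) / 2) * Real.exp (-(r ^ 2 / t / 8)) := by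
    intro t ht
    unfold hkG
    rw [hc0, ← Real.mul_rpow (by positivity) (by positivity)]
    congr 2
    · ring
    · field_simp; ring
  have h := hk_T0 (a := 0) (b := -a - 1 - (N : ℝ) / 2) (c₁ := c0 * M * r ^ (-2 * k)) (c₂ := c0)
    (R := r ^ 2) (f := fun t => t ^ (-a - 1) * hkG N z (2 * t)) (by norm_num) (by linarith)
    (by positivity) (by positivity) (by positivity)
    (fun t ht htR => by
      rw [hG t ht, Real.rpow_zero, mul_one]
      have h1 := hE (r ^ 2 / t) (by rw [le_div_iff₀ ht]; linarith)
      have e : (r ^ 2 / t) ^ (-k) = r ^ (-2 * k) * t ^ k := by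
        rw [Real.div_rpow (by positivity) ht.le, Real.rpow_neg ht.le, div_inv_eq_mul,
          ← Real.rpow_natCast, ← Real.rpow_mul hr0.le]
        push_cast; ring_nf
      rw [e] at h1
      have e2 : t ^ (-a - 1) * t ^ (-(N : ℝ) / 2) * t ^ k = 1 := by
        rw [← Real.rpow_add ht, ← Real.rpow_add ht, hk]; ring_nf; simp
      calc _ ≤ t ^ (-a - 1) * (c0 * t ^ (-(N : ℝ) / 2) * (M * (r ^ (-2 * k) * t ^ k))) := by
            gcongr
        _ = c0 * M * r ^ (-2 * k) * (t ^ (-a - 1) * t ^ (-(N : ℝ) / 2) * t ^ k) := by ring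
        _ ≤ _ := by rw [e2, mul_one])
    (fun t htR => by
      have ht : 0 < t := lt_trans (by positivity) htR
      rw [hG t ht]
      have h1 : Real.exp (-(r ^ 2 / t / 8)) ≤ 1 := by
        apply Real.exp_le_one_iff.2
        have : 0 ≤ r ^ 2 / t / 8 := by positivity
        linarith
      calc _ ≤ t ^ (-a - 1) * (c0 * t ^ (-(N : ℝ) / 2) * 1) := by gcongr
        _ = c0 * (t ^ (-a - 1) * t ^ (-(N : ℝ) / 2)) := by ring
        _ = _ := by rw [← Real.rpow_add ht]; ring_nf)
  refine h.trans (ENNReal.ofReal_le_ofReal (le_of_eq ?_))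
  have e1 : r ^ (-2 * k) * (r ^ 2) ^ ((0 : ℝ) + 1) = (r ^ ((N : ℝ) + 2 * a))⁻¹ := by
    rw [← Real.rpow_natCast, ← Real.rpow_mul hr0.le, ← Real.rpow_add hr0, ← Real.rpow_neg hr0.le]
    congr 1; push_cast; rw [hk]; ring
  have e2 : (r ^ 2) ^ (-a - 1 - (N : ℝ) / 2 + 1) = (r ^ ((N : ℝ) + 2 * a))⁻¹ := by
    rw [← Real.rpow_natCast, ← Real.rpow_mul hr0.le, ← Real.rpow_neg hr0.le]
    congr 1; push_cast; ring
  rw [e2]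
  calc _ = c0 * M * (r ^ (-2 * k) * (r ^ 2) ^ ((0 : ℝ) + 1)) + c0 * ((r ^ ((N : ℝ) + 2 * a))⁻¹ / -(-a - 1 - (N : ℝ) / 2 + 1)) := by
        ring
    _ = _ := by
        rw [e1]
        have : -(-a - 1 - (N : ℝ) / 2 + 1) = a + N / 2 := by ring
        rw [this]; ring

/-- time integral of min -/
lemma hk_sigma {s : ℝ} (hs0 : 0 < s) (hs1 : s < 1) : ∃ C : ℝ, 0 < C ∧ ∀ r : ℝ, 0 < r →
    ∫⁻ t in Ioi (0 : ℝ), ENNReal.ofReal (t ^ (-(1 - s / 2)) * min 1 (r / √t)) ≤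
      ENNReal.ofReal (C * r ^ s) := by
  have hp : 0 < 1 - s := by linarith
  refine ⟨1 / (s / 2) + 1 / ((1 - s) / 2), by positivity, fun r hr => ?_⟩
  have h := hk_T0 (a := -(1 - s / 2)) (b := -(1 - s / 2) - 1 / 2) (c₁ := 1) (c₂ := r)
    (R := r ^ 2) (f := fun t => t ^ (-(1 - s / 2)) * min 1 (r / √t)) (by linarith) (by linarith)
    (by positivity) (by positivity) (by positivity)
    (fun t ht htR => by
      have : min 1 (r / √t) ≤ 1 := min_le_left _ _
      have h2 : 0 ≤ t ^ (-(1 - s / 2)) := by positivity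
      nlinarith)
    (fun t htR => by
      have ht : 0 < t := lt_trans (by positivity) htR
      calc _ ≤ t ^ (-(1 - s / 2)) * (r / √t) := by gcongr; exact min_le_right _ _
        _ = _ := by rw [Real.rpow_sub ht, Real.sqrt_eq_rpow]; ring)
  refine h.trans (ENNReal.ofReal_le_ofReal (le_of_eq ?_))
  have e1 : (r ^ 2) ^ (-(1 - s / 2) + 1) = r ^ s := by
    rw [← Real.rpow_natCast, ← Real.rpow_mul hr.le]; congr 1; push_cast; ring
  have e2 : r * (r ^ 2) ^ (-(1 - s / 2) - 1 / 2 + 1) = r ^ s := by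
    rw [← Real.rpow_natCast, ← Real.rpow_mul hr.le]
    nth_rw 1 [← Real.rpow_one r]
    rw [← Real.rpow_add hr]; congr 1; push_cast; ring
  rw [mul_div_assoc' r, e2, e1]
  have e3 : -(1 - s / 2) + 1 = s / 2 := by ring
  have e4 : -(-(1 - s / 2) - 1 / 2 + 1) = (1 - s) / 2 := by ring
  rw [e3, e4]; ring

lemma hk_radial {N : ℕ} (hN : 0 < N) {a b : ℝ} (ha : 0 < a) (hab : a < b) : ∃ C : ℝ, 0 < C ∧
    ∀ ρ : ℝ, 0 < ρ →
    ∫⁻ h : Euc N, ENNReal.ofReal (min 1 ((‖h‖ / ρ) ^ b) / ‖h‖ ^ ((N : ℝ) + a)) ≤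
      ENNReal.ofReal (C * ρ ^ (-a)) := by
  have : Nonempty (Fin N) := ⟨⟨0, hN⟩⟩
  have hb0 : 0 < b := ha.trans hab
  have hba : 0 < b - a := by linarith
  set V : ℝ := (volume : Measure (Euc N)).real (ball 0 1) with hV
  have hV0 : 0 ≤ V := by positivity
  set K : ℝ := 1 / (b - a) + 1 / a with hK
  have hK0 : 0 < K := by positivity
  refine ⟨(N * V + 1) * K, by positivity, fun ρ hρ => ?_⟩
  set f : ℝ → ℝ := fun r => min 1 ((r / ρ) ^ b) / r ^ ((N : ℝ) + a) with hf
  have hf0 : ∀ r, 0 ≤ r → 0 ≤ f r := by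
    intro r hr
    rw [hf]; positivity
  have hfm : Measurable f := by rw [hf]; fun_prop
  have hpow : ∀ r : ℝ, 0 < r → r ^ (N - 1) = r ^ ((N : ℝ) - 1) := by
    intro r hr
    rw [← Real.rpow_natCast]; congr 1
    push_cast [Nat.cast_sub (show 1 ≤ N from hN)]; ring
  have h := hk_T0 (a := b - a - 1) (b := -a - 1) (c₁ := ρ ^ (-b)) (c₂ := 1)
    (R := ρ) (f := fun r => r ^ (N - 1) * f r) (by linarith) (by linarith)
    (by positivity) (by positivity) hρ
    (fun r hr hrR => by
      rw [hpow r hr]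
      calc _ ≤ r ^ ((N : ℝ) - 1) * ((r / ρ) ^ b / r ^ ((N : ℝ) + a)) := by
            rw [hf]; dsimp only; gcongr; exact min_le_right _ _
        _ = _ := by
          have e : r ^ (b - a - 1) = r ^ ((N : ℝ) - 1) * r ^ b / r ^ ((N : ℝ) + a) := by
            rw [← Real.rpow_add hr, ← Real.rpow_sub hr]; congr 1; ring
          rw [Real.div_rpow hr.le hρ.le, Real.rpow_neg hρ.le, e]
          ring)
    (fun r hrR => by
      have hr : 0 < r := hρ.trans hrR
      rw [hpow r hr]
      calc _ ≤ r ^ ((N : ℝ) - 1) * (1 / r ^ ((N : ℝ) + a)) := by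
            rw [hf]; dsimp only; gcongr; exact min_le_left _ _
        _ = _ := by
          have e : r ^ (-a - 1) = r ^ ((N : ℝ) - 1) / r ^ ((N : ℝ) + a) := by
            rw [← Real.rpow_sub hr]; congr 1; ring
          rw [e]
          ring)
  have e1 : ρ ^ (-b) * (ρ ^ (b - a - 1 + 1) / (b - a - 1 + 1)) +
      1 * (ρ ^ (-a - 1 + 1) / -(-a - 1 + 1)) = K * ρ ^ (-a) := by
    rw [mul_div_assoc', ← Real.rpow_add hρ, hK]
    have e2 : -b + (b - a - 1 + 1) = -a := by ring
    have e3 : -a - 1 + 1 = -a := by ring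
    rw [e2, e3, neg_neg]
    ring
  rw [e1] at h
  have hg0 : ∀ᵐ r ∂volume.restrict (Ioi (0 : ℝ)), 0 ≤ r ^ (N - 1) * f r :=
    (ae_restrict_iff' measurableSet_Ioi).2 (Eventually.of_forall fun r hr => by
      have := hf0 r (le_of_lt hr)
      have h2 : (0 : ℝ) < r := hr
      positivity)
  have hgi : IntegrableOn (fun r => r ^ (N - 1) * f r) (Ioi 0) := by
    refine ⟨by fun_prop, ?_⟩
    rw [hasFiniteIntegral_iff_ofReal hg0]
    exact h.trans_lt ENNReal.ofReal_lt_top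
  have hfi : Integrable (fun h : Euc N => f ‖h‖) := by
    rw [integrable_fun_norm_addHaar]
    simpa using hgi
  change ∫⁻ h : Euc N, ENNReal.ofReal (f ‖h‖) ≤ _
  rw [← ofReal_integral_eq_lintegral_ofReal hfi (Eventually.of_forall fun h => hf0 _ (norm_nonneg _)),
    integral_fun_norm_addHaar]
  apply ENNReal.ofReal_le_ofReal
  have h2 : ∫ r in Ioi (0 : ℝ), r ^ (N - 1) * f r ≤ K * ρ ^ (-a) := by
    rw [integral_eq_lintegral_of_nonneg_ae hg0 hgi.1]
    exact ENNReal.toReal_le_of_le_ofReal (by positivity) h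
  simp only [finrank_euclideanSpace, Fintype.card_fin, nsmul_eq_mul, smul_eq_mul]
  rw [← hV]
  have h3 : (0 : ℝ) ≤ K * ρ ^ (-a) := by positivity
  calc _ ≤ (N : ℝ) * (V * (K * ρ ^ (-a))) := by gcongr
    _ ≤ _ := by nlinarith

lemma hk_jensen {α : Type*} [MeasurableSpace α] (μ : Measure α) {p : ℝ} (hp : 1 < p)
    {k f : α → ENNReal} (hk : AEMeasurable k μ) (hf : AEMeasurable f μ) :
    (∫⁻ a, k a * f a ∂μ) ^ p ≤ (∫⁻ a, k a ∂μ) ^ (p - 1) * ∫⁻ a, k a * f a ^ p ∂μ := by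
  have hp0 : 0 < p := by linarith
  have hp1 : 0 < p - 1 := by linarith
  have hpq := Real.HolderConjugate.conjExponent hp
  set q := Real.conjExponent p with hq
  have hq0 : 0 < q := hpq.symm.pos
  have hsum : 1 / q + 1 / p = 1 := by
    have := hpq.inv_add_inv_eq_one
    rw [one_div, one_div]; linarith
  have h := ENNReal.lintegral_mul_le_Lp_mul_Lq μ hpq.symm (f := fun a => k a ^ (1 / q))
    (g := fun a => k a ^ (1 / p) * f a) (hk.pow_const _) ((hk.pow_const _).mul hf)
  have e1 : ∀ a, ((fun a => k a ^ (1 / q)) * fun a => k a ^ (1 / p) * f a) a = k a * f a := by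
    intro a
    simp only [Pi.mul_apply]
    rw [← mul_assoc, ← ENNReal.rpow_add_of_nonneg _ _ (by positivity) (by positivity), hsum,
      ENNReal.rpow_one]
  have e2 : ∀ a, (k a ^ (1 / q)) ^ q = k a := by
    intro a
    rw [← ENNReal.rpow_mul, one_div_mul_cancel hq0.ne', ENNReal.rpow_one]
  have e3 : ∀ a, (k a ^ (1 / p) * f a) ^ p = k a * f a ^ p := by
    intro a
    rw [ENNReal.mul_rpow_of_nonneg _ _ hp0.le, ← ENNReal.rpow_mul, one_div_mul_cancel hp0.ne',
      ENNReal.rpow_one]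
  simp_rw [e1, e2, e3] at h
  calc _ ≤ ((∫⁻ a, k a ∂μ) ^ (1 / q) * (∫⁻ a, k a * f a ^ p ∂μ) ^ (1 / p)) ^ p := by gcongr
    _ = _ := by
      rw [ENNReal.mul_rpow_of_nonneg _ _ hp0.le, ← ENNReal.rpow_mul, ← ENNReal.rpow_mul,
        one_div_mul_cancel hp0.ne', ENNReal.rpow_one]
      congr 2
      have : 1 / q = 1 - 1 / p := by linarith
      rw [this]; field_simp

/-- L1 bound of differences of the kernel -/
lemma hk_exp_diff (a b : ℝ) : |Real.exp (-a) - Real.exp (-b)| ≤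
    |a - b| * (Real.exp (-a) + Real.exp (-b)) := by
  wlog h : a ≤ b generalizing a b
  · have := this b a (by linarith)
    rw [abs_sub_comm, abs_sub_comm a b, add_comm (Real.exp (-a))]; exact this
  rw [abs_of_nonneg (sub_nonneg.2 (Real.exp_le_exp.2 (by linarith))), abs_of_nonpos (by linarith)]
  have h1 := Real.add_one_le_exp (a - b)
  have h2 : Real.exp (-b) = Real.exp (-a) * Real.exp (a - b) := by
    rw [← Real.exp_add]; congr 1; ring
  have h3 := Real.exp_pos (-a)
  have h4 := Real.exp_pos (-b)
  have h5 : Real.exp (-a) - Real.exp (-b) ≤ (b - a) * Real.exp (-a) := by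
    rw [h2]; nlinarith
  nlinarith

lemma hkG_diff_pt {N : ℕ} (y h : Euc N) {t : ℝ} (ht : 0 < t) (hh : ‖h‖ ≤ √t) :
    |hkG N (y + h) t - hkG N y t| ≤ ‖h‖ / √t * (10 * hkc N + 1) *
      (hkG N (y + h) (2 * t) + hkG N y (2 * t) + hkG N (y + h) t + hkG N y t) := by
  set c := (4 * π * t) ^ (-(N : ℝ) / 2) with hc
  have hc0 : 0 < c := by positivity
  have hs : 0 < √t := by positivity
  have hst : √t * √t = t := Real.mul_self_sqrt ht.le
  have e : ∀ z, hkG N z t = c * Real.exp (-(‖z‖ ^ 2 / (4 * t))) := by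
    intro z; unfold hkG; rw [neg_div (4 * t)]
  have h1 := hk_exp_diff (‖y + h‖ ^ 2 / (4 * t)) (‖y‖ ^ 2 / (4 * t))
  have g1 : |hkG N (y + h) t - hkG N y t| ≤
      |‖y + h‖ ^ 2 / (4 * t) - ‖y‖ ^ 2 / (4 * t)| * (hkG N (y + h) t + hkG N y t) := by
    rw [e, e, ← mul_sub, abs_mul, abs_of_pos hc0, ← mul_add]
    calc _ ≤ c * _ := mul_le_mul_of_nonneg_left h1 hc0.le
      _ = _ := by ring
  have p1 := hkG_pos (y + h) ht
  have p2 := hkG_pos y ht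
  have q1 := hkG_pos (y + h) (t := 2 * t) (by positivity)
  have q2 := hkG_pos y (t := 2 * t) (by positivity)
  have n1 : |‖y + h‖ - ‖y‖| ≤ ‖h‖ := by
    have := abs_norm_sub_norm_le (y + h) y
    simpa using this
  have n2 : ‖y‖ ≤ ‖y + h‖ + ‖h‖ := by linarith [(abs_le.1 n1).1]
  have n3 : ‖y + h‖ ≤ ‖y‖ + ‖h‖ := norm_add_le _ _
  have g2 : |‖y + h‖ ^ 2 / (4 * t) - ‖y‖ ^ 2 / (4 * t)| ≤ ‖h‖ * (‖y + h‖ + ‖y‖) / (4 * t) := by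
    rw [← sub_div, abs_div, abs_of_pos (show 0 < 4 * t by positivity), sq_sub_sq, abs_mul,
      abs_of_nonneg (show 0 ≤ ‖y + h‖ + ‖y‖ by positivity), mul_comm]
    gcongr
  have k1 := hkG_norm (y + h) ht
  have k2 := hkG_norm y ht
  have g3 : (‖y + h‖ + ‖y‖) * (hkG N (y + h) t + hkG N y t) ≤
      √t * ((10 * hkc N + 1) *
      (hkG N (y + h) (2 * t) + hkG N y (2 * t) + hkG N (y + h) t + hkG N y t)) := by
    have hk := hkc_pos N
    calc _ = (‖y + h‖ + ‖y‖) * hkG N (y + h) t + (‖y + h‖ + ‖y‖) * hkG N y t := by ring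
      _ ≤ (‖y + h‖ + (‖y + h‖ + √t)) * hkG N (y + h) t + ((‖y‖ + √t) + ‖y‖) * hkG N y t := by
        gcongr <;> linarith
      _ = 2 * (‖y + h‖ * hkG N (y + h) t) + 2 * (‖y‖ * hkG N y t) +
          √t * (hkG N (y + h) t + hkG N y t) := by ring
      _ ≤ 2 * (hkc N * 5 * √t * hkG N (y + h) (2 * t)) + 2 * (hkc N * 5 * √t * hkG N y (2 * t)) +
          √t * (hkG N (y + h) t + hkG N y t) := by gcongr
      _ = √t * (10 * hkc N * (hkG N (y + h) (2 * t) + hkG N y (2 * t)) +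
          (hkG N (y + h) t + hkG N y t)) := by ring
      _ ≤ _ := by
        gcongr
        nlinarith [mul_pos hk p1, mul_pos hk p2]
  have hk := hkc_pos N
  calc _ ≤ ‖h‖ * (‖y + h‖ + ‖y‖) / (4 * t) * (hkG N (y + h) t + hkG N y t) :=
        g1.trans (by gcongr)
    _ = ‖h‖ / (4 * t) * ((‖y + h‖ + ‖y‖) * (hkG N (y + h) t + hkG N y t)) := by ring
    _ ≤ ‖h‖ / (4 * t) * (√t * ((10 * hkc N + 1) *
      (hkG N (y + h) (2 * t) + hkG N y (2 * t) + hkG N (y + h) t + hkG N y t))) := by gcongr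
    _ ≤ ‖h‖ / t * (√t * ((10 * hkc N + 1) *
      (hkG N (y + h) (2 * t) + hkG N y (2 * t) + hkG N (y + h) t + hkG N y t))) := by
        gcongr; linarith
    _ = _ := by
      have : ‖h‖ / √t = ‖h‖ / t * √t := by
        nth_rw 2 [← hst]; field_simp
      rw [this]; ring

def hkC (N : ℕ) : ℝ := 4 * (10 * hkc N + 1)
lemma hkC_pos (N : ℕ) : 0 < hkC N := by
  have := hkc_pos N
  unfold hkC; positivity

lemma hkG_diff_lint {N : ℕ} (h : Euc N) {t : ℝ} (ht : 0 < t) :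
    ∫⁻ y, ENNReal.ofReal |hkG N (y + h) t - hkG N y t| ≤
      ENNReal.ofReal (hkC N * min 1 (‖h‖ / √t)) := by
  have hk := hkc_pos N
  have hs : 0 < √t := by positivity
  have i1 : ∀ τ, 0 < τ → Integrable fun y : Euc N => hkG N (y + h) τ :=
    fun τ hτ => (hkG_int hτ).comp_add_right h
  have v1 : ∀ τ, 0 < τ → ∫ y : Euc N, hkG N (y + h) τ = 1 := fun τ hτ => by
    rw [integral_add_right_eq_self (fun y => hkG N y τ), hkG_integral hτ]
  have i0 : Integrable fun y => |hkG N (y + h) t - hkG N y t| := ((i1 t ht).sub (hkG_int ht)).abs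
  rw [← ofReal_integral_eq_lintegral_ofReal i0 (Eventually.of_forall fun y => abs_nonneg _)]
  apply ENNReal.ofReal_le_ofReal
  rcases le_total ‖h‖ √t with hh | hh
  · rw [min_eq_right ((div_le_one hs).2 hh)]
    have i2 : Integrable fun y : Euc N => hkG N (y + h) (2 * t) + hkG N y (2 * t) +
        hkG N (y + h) t + hkG N y t :=
      (((i1 _ (by positivity)).add (hkG_int (by positivity))).add (i1 t ht)).add (hkG_int ht)
    calc _ ≤ ∫ y : Euc N, ‖h‖ / √t * (10 * hkc N + 1) *
        (hkG N (y + h) (2 * t) + hkG N y (2 * t) + hkG N (y + h) t + hkG N y t) :=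
          integral_mono i0 (i2.const_mul _) fun y => hkG_diff_pt y h ht hh
      _ = _ := by
        rw [integral_const_mul, integral_add, integral_add, integral_add, v1 _ (by positivity),
          v1 t ht, hkG_integral ht, hkG_integral (by positivity)]
        · unfold hkC; ring
        · exact i1 _ (by positivity)
        · exact hkG_int (by positivity)
        · exact (i1 _ (by positivity)).add (hkG_int (by positivity))
        · exact i1 t ht
        · exact ((i1 _ (by positivity)).add (hkG_int (by positivity))).add (i1 t ht)
        · exact hkG_int ht
  · rw [min_eq_left ((one_le_div hs).2 hh)]
    calc _ ≤ ∫ y : Euc N, (hkG N (y + h) t + hkG N y t) :=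
          integral_mono i0 ((i1 t ht).add (hkG_int ht)) fun y => by
            have p1 := hkG_pos (y + h) ht
            have p2 := hkG_pos y ht
            exact abs_le.2 ⟨by linarith, by linarith⟩
      _ = 2 := by
        rw [integral_add (i1 t ht) (hkG_int ht), v1 t ht, hkG_integral ht]; norm_num
      _ ≤ _ := by unfold hkC; linarith

def hkA (N : ℕ) (s p : ℝ) (η : Euc N → ℝ) : ENNReal :=
  ∫⁻ x, ∫⁻ y, ENNReal.ofReal (|η x - η y| ^ p / ‖x - y‖ ^ ((N : ℝ) + s * p))

def hkB (N : ℕ) (s p : ℝ) (η : Euc N → ℝ) : ENNReal :=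
  ∫⁻ t in Ioi (0 : ℝ), ∫⁻ x, ENNReal.ofReal (|t ^ (1 - s / 2) * hkW N η x t| ^ p / t)

lemma hkA_fin {N : ℕ} (hN : 0 < N) {s p : ℝ} (hs0 : 0 < s) (hs1 : s < 1) (hp : 1 < p)
    {η : Euc N → ℝ} (hc : Continuous η) (hη : HasCompactSupport η) {L : NNReal}
    (hL : LipschitzWith L η) : hkA N s p η < ⊤ := by
  have hp0 : 0 < p := by linarith
  obtain ⟨M, hM⟩ := hη.exists_bound_of_continuous hc
  have hM0 : 0 ≤ M := (norm_nonneg _).trans (hM 0)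
  obtain ⟨C, hC0, hC⟩ := hk_radial hN (a := s * p) (b := p) (by positivity) (by nlinarith)
  have hI := hC 1 one_pos
  set D : ℝ := L + 2 * M with hD
  have hD0 : 0 ≤ D := by positivity
  set K := tsupport η with hK
  have hKm : MeasurableSet K := (isClosed_tsupport η).measurableSet
  have hKfin : volume K < ⊤ := hη.isCompact.measure_lt_top
  set φ : Euc N → ENNReal := fun h =>
    ENNReal.ofReal (min 1 ((‖h‖ / 1) ^ p) / ‖h‖ ^ ((N : ℝ) + s * p)) with hφ
  have hφm : Measurable φ := by rw [hφ]; fun_prop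
  have hpt : ∀ x y, ENNReal.ofReal (|η x - η y| ^ p / ‖x - y‖ ^ ((N : ℝ) + s * p)) ≤
      K.indicator 1 x * (ENNReal.ofReal (D ^ p) * φ (x - y)) +
      K.indicator 1 y * (ENNReal.ofReal (D ^ p) * φ (x - y)) := by
    intro x y
    have hb : ENNReal.ofReal (|η x - η y| ^ p / ‖x - y‖ ^ ((N : ℝ) + s * p)) ≤
        ENNReal.ofReal (D ^ p) * φ (x - y) := by
      rw [hφ]
      dsimp only
      rw [← ENNReal.ofReal_mul (by positivity), mul_div_assoc']
      apply ENNReal.ofReal_le_ofReal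
      gcongr
      have h1 : |η x - η y| ≤ L * ‖x - y‖ := by
        rw [← Real.norm_eq_abs, ← dist_eq_norm, ← dist_eq_norm]; exact hL.dist_le_mul x y
      have h2 : |η x - η y| ≤ 2 * M := by
        have a1 := hM x
        have a2 := hM y
        have a3 := norm_sub_le (η x) (η y)
        rw [Real.norm_eq_abs] at a3
        linarith
      rw [div_one]
      rcases le_total ‖x - y‖ 1 with h3 | h3
      · have h4 : ‖x - y‖ ^ p ≤ 1 := Real.rpow_le_one (norm_nonneg _) h3 hp0.le
        rw [min_eq_right h4, ← Real.mul_rpow hD0 (norm_nonneg _)]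
        refine Real.rpow_le_rpow (abs_nonneg _) (h1.trans ?_) hp0.le
        gcongr
        rw [hD]; linarith
      · have h4 : 1 ≤ ‖x - y‖ ^ p := Real.one_le_rpow h3 hp0.le
        rw [min_eq_left h4, mul_one]
        refine Real.rpow_le_rpow (abs_nonneg _) (h2.trans ?_) hp0.le
        rw [hD]; linarith [L.coe_nonneg]
    by_cases hx : x ∈ K
    · simp only [indicator_of_mem hx, Pi.one_apply, one_mul]
      exact hb.trans le_self_add
    · by_cases hy : y ∈ K
      · simp only [indicator_of_mem hy, Pi.one_apply, one_mul]
        exact hb.trans le_add_self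
      · rw [image_eq_zero_of_notMem_tsupport hx, image_eq_zero_of_notMem_tsupport hy]
        simp [Real.zero_rpow hp0.ne']
  have hind : Measurable (K.indicator (1 : Euc N → ENNReal)) := measurable_one.indicator hKm
  have hI1 : ∀ x, ∫⁻ y, φ (x - y) ≤ ENNReal.ofReal (C * 1 ^ (-(s * p))) := by
    intro x
    rw [lintegral_sub_left_eq_self φ x]; exact hI
  have hI2 : ∀ y, ∫⁻ x, φ (x - y) ≤ ENNReal.ofReal (C * 1 ^ (-(s * p))) := by
    intro y
    rw [lintegral_sub_right_eq_self φ y]; exact hI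
  have hKi : ∫⁻ x, K.indicator (1 : Euc N → ENNReal) x = volume K := by
    rw [lintegral_indicator_one hKm]
  unfold hkA
  set T := ENNReal.ofReal (D ^ p) * ENNReal.ofReal (C * 1 ^ (-(s * p))) with hT
  have hTfin : T < ⊤ := ENNReal.mul_lt_top ENNReal.ofReal_lt_top ENNReal.ofReal_lt_top
  calc _ ≤ ∫⁻ x, ∫⁻ y, (K.indicator 1 x * (ENNReal.ofReal (D ^ p) * φ (x - y)) +
      K.indicator 1 y * (ENNReal.ofReal (D ^ p) * φ (x - y))) := by
        gcongr with x y; exact hpt x y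
    _ = (∫⁻ x, ∫⁻ y, K.indicator 1 x * (ENNReal.ofReal (D ^ p) * φ (x - y))) +
      ∫⁻ x, ∫⁻ y, K.indicator 1 y * (ENNReal.ofReal (D ^ p) * φ (x - y)) := by
        rw [← lintegral_add_left]
        · congr 1; funext x
          rw [lintegral_add_left (by fun_prop)]
        · apply Measurable.lintegral_prod_right' (f := fun q : Euc N × Euc N =>
            K.indicator 1 q.1 * (ENNReal.ofReal (D ^ p) * φ (q.1 - q.2)))
          fun_prop
    _ = (∫⁻ x, ∫⁻ y, K.indicator 1 x * (ENNReal.ofReal (D ^ p) * φ (x - y))) +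
      ∫⁻ y, ∫⁻ x, K.indicator 1 y * (ENNReal.ofReal (D ^ p) * φ (x - y)) := by
        congr 1
        rw [lintegral_lintegral_swap]
        apply Measurable.aemeasurable
        show Measurable (fun q : Euc N × Euc N =>
            K.indicator 1 q.2 * (ENNReal.ofReal (D ^ p) * φ (q.1 - q.2)))
        fun_prop
    _ ≤ (∫⁻ x, K.indicator 1 x * T) + ∫⁻ y, K.indicator 1 y * T := by
        gcongr with x y
        · rw [lintegral_const_mul _ (by fun_prop), lintegral_const_mul _ (by fun_prop)]
          rw [hT]; gcongr; exact hI1 x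
        · rw [lintegral_const_mul _ (by fun_prop), lintegral_const_mul _ (by fun_prop)]
          rw [hT]; gcongr; exact hI2 y
    _ = volume K * T + volume K * T := by
        rw [lintegral_mul_const _ hind, hKi]
    _ < ⊤ := by
        have := ENNReal.mul_lt_top hKfin hTfin
        exact ENNReal.add_lt_top.2 ⟨this, this⟩

lemma hkW_up {N : ℕ} {η : Euc N → ℝ} (hc : Continuous η) (hi : Integrable η) (x : Euc N) {t : ℝ}
    (ht : 0 < t) : ENNReal.ofReal |hkW N η x t| ≤ ENNReal.ofReal (hkc N / t) *
      ∫⁻ y, ENNReal.ofReal (hkG N (x - y) (2 * t)) * ENNReal.ofReal |η x - η y| := by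
  have hd : Continuous fun y => hkD N (x - y) t := (hkD_cont t).comp (by fun_prop)
  have hk := hkc_pos N
  have i1 : Integrable (fun y => hkD N (x - y) t * η y) :=
    hi.bdd_mul hd.aestronglyMeasurable (Eventually.of_forall fun y => hkD_bd' _ ht le_rfl)
  have i2 : Integrable (fun y => hkD N (x - y) t) := (hkD_integral ht).1.comp_sub_left x
  have e : hkW N η x t = ∫ y, hkD N (x - y) t * (η y - η x) := by
    simp_rw [mul_sub]
    rw [integral_sub i1 (i2.mul_const _), integral_mul_const,
      integral_sub_left_eq_self (fun y => hkD N y t), (hkD_integral ht).2, zero_mul, sub_zero, hkW]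
  rw [e, ← lintegral_const_mul' _ _ ENNReal.ofReal_ne_top, ← Real.norm_eq_abs, ofReal_norm]
  refine (enorm_integral_le_lintegral_enorm _).trans (lintegral_mono fun y => ?_)
  dsimp only
  have hg := hkG_pos (x - y) (t := 2 * t) (by positivity)
  rw [← mul_assoc, ← ENNReal.ofReal_mul (by positivity), ← ENNReal.ofReal_mul (by positivity),
    ← ofReal_norm, norm_mul, Real.norm_eq_abs, Real.norm_eq_abs, abs_sub_comm (η x)]
  apply ENNReal.ofReal_le_ofReal
  gcongr
  exact hkD_bd _ ht

lemma hkW_up2 {N : ℕ} {s p : ℝ} (hp : 1 < p) {η : Euc N → ℝ} (hc : Continuous η)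
    (hi : Integrable η) (x : Euc N) {t : ℝ} (ht : 0 < t) :
    ENNReal.ofReal (|t ^ (1 - s / 2) * hkW N η x t| ^ p / t) ≤
    ENNReal.ofReal (hkc N ^ p) * ∫⁻ y, ENNReal.ofReal (|η x - η y| ^ p) *
      ENNReal.ofReal (t ^ (-(s * p / 2) - 1) * hkG N (x - y) (2 * t)) := by
  have hp0 : 0 < p := by linarith
  have hk := hkc_pos N
  have hgm : Measurable fun y => ENNReal.ofReal (hkG N (x - y) (2 * t)) :=
    ((hkG_cont _).measurable.comp (f := fun y => x - y) (by fun_prop)).ennreal_ofReal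
  have hem : Measurable fun y => ENNReal.ofReal |η x - η y| := by
    have := hc.measurable
    fun_prop
  have hj := hk_jensen volume hp hgm.aemeasurable hem.aemeasurable
  rw [lintegral_sub_left_eq_self (fun y => ENNReal.ofReal (hkG N y (2 * t))),
    hkG_lint (by positivity), ENNReal.one_rpow, one_mul] at hj
  have h1 := ENNReal.rpow_le_rpow (hkW_up hc hi x ht) hp0.le
  rw [ENNReal.mul_rpow_of_nonneg _ _ hp0.le, ENNReal.ofReal_rpow_of_nonneg (abs_nonneg _) hp0.le,
    ENNReal.ofReal_rpow_of_nonneg (by positivity) hp0.le] at h1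
  have e1 : |t ^ (1 - s / 2) * hkW N η x t| ^ p / t =
      t ^ ((1 - s / 2) * p - 1) * |hkW N η x t| ^ p := by
    rw [abs_mul, abs_of_pos (by positivity), Real.mul_rpow (by positivity) (abs_nonneg _),
      ← Real.rpow_mul ht.le, Real.rpow_sub_one ht.ne']
    ring
  have e2 : t ^ ((1 - s / 2) * p - 1) * (hkc N / t) ^ p = hkc N ^ p * t ^ (-(s * p / 2) - 1) := by
    rw [Real.div_rpow hk.le ht.le]
    have : t ^ ((1 - s / 2) * p - 1) = t ^ (-(s * p / 2) - 1) * t ^ p := by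
      rw [← Real.rpow_add ht]; congr 1; ring
    rw [this]; field_simp
  calc _ = ENNReal.ofReal (t ^ ((1 - s / 2) * p - 1)) * ENNReal.ofReal (|hkW N η x t| ^ p) := by
        rw [e1, ENNReal.ofReal_mul (by positivity)]
    _ ≤ ENNReal.ofReal (t ^ ((1 - s / 2) * p - 1)) * (ENNReal.ofReal ((hkc N / t) ^ p) *
        ∫⁻ y, ENNReal.ofReal (hkG N (x - y) (2 * t)) * ENNReal.ofReal |η x - η y| ^ p) := by
        gcongr
        exact h1.trans (by gcongr)
    _ = ENNReal.ofReal (hkc N ^ p) * (ENNReal.ofReal (t ^ (-(s * p / 2) - 1)) *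
        ∫⁻ y, ENNReal.ofReal (hkG N (x - y) (2 * t)) * ENNReal.ofReal |η x - η y| ^ p) := by
        rw [← mul_assoc, ← ENNReal.ofReal_mul (by positivity), e2,
          ENNReal.ofReal_mul (by positivity), mul_assoc]
    _ = _ := by
        rw [← lintegral_const_mul' _ _ ENNReal.ofReal_ne_top]
        congr 2
        funext y
        rw [ENNReal.ofReal_rpow_of_nonneg (abs_nonneg _) hp0.le,
          ENNReal.ofReal_mul (by positivity)]
        ring

lemma hk_upper {N : ℕ} {s p : ℝ} (hs0 : 0 < s) (hp : 1 < p) :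
    ∃ C : ℝ, 0 < C ∧ ∀ η : Euc N → ℝ, Continuous η → Integrable η →
      hkB N s p η ≤ ENNReal.ofReal C * hkA N s p η := by
  have hp0 : 0 < p := by linarith
  have hk := hkc_pos N
  obtain ⟨C, hC0, hC⟩ := hk_time N (a := s * p / 2) (by positivity)
  refine ⟨hkc N ^ p * C, by positivity, fun η hc hi => ?_⟩
  have hm := hc.measurable
  set F : Euc N → Euc N → ℝ → ENNReal := fun x y t => ENNReal.ofReal (|η x - η y| ^ p) *
      ENNReal.ofReal (t ^ (-(s * p / 2) - 1) * hkG N (x - y) (2 * t)) with hF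
  have hFm : Measurable (fun q : Euc N × Euc N × ℝ => F q.1 q.2.1 q.2.2) := by
    have hg : Measurable (fun q : Euc N × Euc N × ℝ => hkG N (q.1 - q.2.1) (2 * q.2.2)) :=
      hkG_meas.comp (f := fun q : Euc N × Euc N × ℝ => (q.1 - q.2.1, 2 * q.2.2)) (by fun_prop)
    rw [hF]; fun_prop
  unfold hkB hkA
  calc _ ≤ ∫⁻ t in Ioi (0 : ℝ), ∫⁻ x, ENNReal.ofReal (hkc N ^ p) * ∫⁻ y, F x y t := by
        refine setLIntegral_mono' measurableSet_Ioi fun t ht => lintegral_mono fun x => ?_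
        exact hkW_up2 hp hc hi x ht
    _ = ENNReal.ofReal (hkc N ^ p) * ∫⁻ t in Ioi (0 : ℝ), ∫⁻ x, ∫⁻ y, F x y t := by
        rw [← lintegral_const_mul' _ _ ENNReal.ofReal_ne_top]
        congr 1; funext t
        rw [← lintegral_const_mul' _ _ ENNReal.ofReal_ne_top]
    _ = ENNReal.ofReal (hkc N ^ p) * ∫⁻ x, ∫⁻ y, ∫⁻ t in Ioi (0 : ℝ), F x y t := by
        congr 1
        rw [lintegral_lintegral_swap]
        · congr 1; funext x
          rw [lintegral_lintegral_swap]
          apply Measurable.aemeasurable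
          exact hFm.comp (f := fun q : ℝ × Euc N => (x, q.2, q.1)) (by fun_prop)
        · apply Measurable.aemeasurable
          show Measurable (fun q : ℝ × Euc N => ∫⁻ y, F q.2 y q.1)
          apply Measurable.lintegral_prod_right' (f := fun q : (ℝ × Euc N) × Euc N =>
            F q.1.2 q.2 q.1.1)
          exact hFm.comp (f := fun q : (ℝ × Euc N) × Euc N => (q.1.2, q.2, q.1.1)) (by fun_prop)
    _ ≤ ENNReal.ofReal (hkc N ^ p) * ∫⁻ x, ∫⁻ y, ENNReal.ofReal C *
        ENNReal.ofReal (|η x - η y| ^ p / ‖x - y‖ ^ ((N : ℝ) + s * p)) := by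
        gcongr with x y
        rw [hF]
        dsimp only
        by_cases hxy : x = y
        · subst hxy
          simp [Real.zero_rpow hp0.ne']
        · rw [lintegral_const_mul' _ _ ENNReal.ofReal_ne_top]
          refine (mul_le_mul_right (hC (x - y) (sub_ne_zero.2 hxy)) _).trans (le_of_eq ?_)
          rw [← ENNReal.ofReal_mul (by positivity), ← ENNReal.ofReal_mul (by positivity)]
          congr 1
          rw [show (N : ℝ) + 2 * (s * p / 2) = N + s * p by ring]
          ring
    _ = _ := by
        rw [ENNReal.ofReal_mul (by positivity), mul_assoc]
        congr 1
        rw [← lintegral_const_mul' _ _ ENNReal.ofReal_ne_top]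
        congr 1; funext x
        rw [← lintegral_const_mul' _ _ ENNReal.ofReal_ne_top]

lemma hk_low1 {N : ℕ} (hN : 0 < N) {s p C1 : ℝ} (hp : 1 < p) (hC1 : 0 < C1)
    (hsig : ∀ r : ℝ, 0 < r →
    ∫⁻ t in Ioi (0 : ℝ), ENNReal.ofReal (t ^ (-(1 - s / 2)) * min 1 (r / √t)) ≤
      ENNReal.ofReal (C1 * r ^ s)) {η : Euc N → ℝ} (hc : Continuous η) (hi : Integrable η)
    {L : NNReal} (hL : LipschitzWith L η) (x h : Euc N) (hh : h ≠ 0) :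
    ENNReal.ofReal (|η (x + h) - η x| ^ p) ≤
      ENNReal.ofReal (2 ^ p * (hkC N * (C1 * ‖h‖ ^ s)) ^ (p - 1)) *
      ∫⁻ σ in Ioi (0 : ℝ), ∫⁻ y, ENNReal.ofReal |hkG N (y + h) σ - hkG N y σ| *
        (ENNReal.ofReal (σ ^ ((1 - s / 2) * (p - 1))) *
          ENNReal.ofReal (|hkW N η (x - y) σ| ^ p)) := by
  have hp0 : 0 < p := by linarith
  have hm := hc.measurable
  have hn : 0 < ‖h‖ := norm_pos_iff.2 hh
  have hCp := hkC_pos N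
  set μ : Measure (ℝ × Euc N) := (volume.restrict (Ioi (0 : ℝ))).prod volume with hμ
  set k : ℝ × Euc N → ENNReal := fun q => ENNReal.ofReal |hkG N (q.2 + h) q.1 - hkG N q.2 q.1| *
    ENNReal.ofReal (q.1 ^ (-(1 - s / 2))) with hk
  set f : ℝ × Euc N → ENNReal := fun q => ENNReal.ofReal (q.1 ^ (1 - s / 2)) *
    ENNReal.ofReal |hkW N η (x - q.2) q.1| with hf
  have hg1 : Measurable (fun q : ℝ × Euc N => hkG N (q.2 + h) q.1) :=
    hkG_meas.comp (f := fun q : ℝ × Euc N => (q.2 + h, q.1)) (by fun_prop)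
  have hg2 : Measurable (fun q : ℝ × Euc N => hkG N q.2 q.1) :=
    hkG_meas.comp (f := fun q : ℝ × Euc N => (q.2, q.1)) (by fun_prop)
  have hw : Measurable (fun q : ℝ × Euc N => hkW N η (x - q.2) q.1) :=
    (hkW_meas hm).comp (f := fun q : ℝ × Euc N => (x - q.2, q.1)) (by fun_prop)
  have hgd : Measurable (fun q : ℝ × Euc N =>
      ENNReal.ofReal |hkG N (q.2 + h) q.1 - hkG N q.2 q.1|) :=
    (hg1.sub hg2).norm.ennreal_ofReal
  have hwd : Measurable (fun q : ℝ × Euc N => ENNReal.ofReal |hkW N η (x - q.2) q.1|) :=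
    hw.norm.ennreal_ofReal
  have hkm : Measurable k := by rw [hk]; fun_prop
  have hfm : Measurable f := by rw [hf]; fun_prop
  have hj := hk_jensen μ hp hkm.aemeasurable hfm.aemeasurable
  have h1 : ENNReal.ofReal |η (x + h) - η x| ≤ 2 * ∫⁻ q, k q * f q ∂μ := by
    refine (eta_diff_le hN hc hi hL x h).trans ?_
    rw [hμ, lintegral_prod (fun q => k q * f q) (hkm.mul hfm).aemeasurable]
    gcongr 2 * ?_
    refine setLIntegral_mono' measurableSet_Ioi fun σ hσ => ?_
    have hσ : 0 < σ := hσ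
    rw [hkW_diff hi hm x h hσ, ← Real.norm_eq_abs, ofReal_norm]
    refine (enorm_integral_le_lintegral_enorm _).trans (lintegral_mono fun y => ?_)
    rw [hk, hf]
    dsimp only
    rw [mul_assoc, ← mul_assoc (ENNReal.ofReal (σ ^ (-(1 - s / 2)))), ← ENNReal.ofReal_mul
      (by positivity), ← Real.rpow_add hσ, neg_add_cancel, Real.rpow_zero, ENNReal.ofReal_one,
      one_mul, enorm_mul, ← Real.norm_eq_abs, ← Real.norm_eq_abs, ofReal_norm, ofReal_norm]
  have h2 : ∫⁻ q, k q ∂μ ≤ ENNReal.ofReal (hkC N * (C1 * ‖h‖ ^ s)) := by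
    rw [hμ, lintegral_prod _ hkm.aemeasurable, ENNReal.ofReal_mul hCp.le]
    refine le_trans ?_ (mul_le_mul_right (hsig ‖h‖ hn) _)
    rw [← lintegral_const_mul' _ _ ENNReal.ofReal_ne_top]
    refine setLIntegral_mono' measurableSet_Ioi fun σ hσ => ?_
    have hσ : 0 < σ := hσ
    rw [hk]
    dsimp only
    rw [lintegral_mul_const' _ _ ENNReal.ofReal_ne_top]
    refine (mul_le_mul_left (hkG_diff_lint h hσ) _).trans (le_of_eq ?_)
    rw [← ENNReal.ofReal_mul (by positivity), ← ENNReal.ofReal_mul (by positivity)]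
    congr 1; ring
  have h3 : ∫⁻ q, k q * f q ^ p ∂μ =
      ∫⁻ σ in Ioi (0 : ℝ), ∫⁻ y, ENNReal.ofReal |hkG N (y + h) σ - hkG N y σ| *
        (ENNReal.ofReal (σ ^ ((1 - s / 2) * (p - 1))) *
          ENNReal.ofReal (|hkW N η (x - y) σ| ^ p)) := by
    rw [hμ, lintegral_prod (fun q => k q * f q ^ p) (hkm.mul (hfm.pow_const p)).aemeasurable]
    refine setLIntegral_congr_fun measurableSet_Ioi fun σ hσ => ?_
    have hσ : 0 < σ := hσ
    refine lintegral_congr fun y => ?_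
    rw [hk, hf]
    dsimp only
    rw [ENNReal.mul_rpow_of_nonneg _ _ hp0.le, ENNReal.ofReal_rpow_of_nonneg (abs_nonneg _) hp0.le,
      ENNReal.ofReal_rpow_of_nonneg (by positivity) hp0.le, mul_assoc,
      ← mul_assoc (ENNReal.ofReal (σ ^ (-(1 - s / 2)))), ← ENNReal.ofReal_mul
      (by positivity), ← Real.rpow_mul hσ.le, ← Real.rpow_add hσ]
    congr 4; ring
  rw [← h3]
  have h4 := ENNReal.rpow_le_rpow h1 hp0.le
  rw [ENNReal.mul_rpow_of_nonneg _ _ hp0.le, ENNReal.ofReal_rpow_of_nonneg (abs_nonneg _) hp0.le]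
    at h4
  refine h4.trans ?_
  rw [ENNReal.ofReal_mul (by positivity), mul_assoc]
  have e2 : (2 : ENNReal) ^ p = ENNReal.ofReal (2 ^ p) := by
    rw [← ENNReal.ofReal_rpow_of_nonneg (by norm_num) hp0.le]; norm_num
  rw [e2]
  gcongr
  refine hj.trans ?_
  gcongr
  rw [← ENNReal.ofReal_rpow_of_nonneg (by positivity) (by linarith)]
  exact ENNReal.rpow_le_rpow h2 (by linarith)

lemma hk_low2 {N : ℕ} (hN : 0 < N) {s p C1 : ℝ} (hp : 1 < p) (hC1 : 0 < C1)
    (hsig : ∀ r : ℝ, 0 < r →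
    ∫⁻ t in Ioi (0 : ℝ), ENNReal.ofReal (t ^ (-(1 - s / 2)) * min 1 (r / √t)) ≤
      ENNReal.ofReal (C1 * r ^ s)) {η : Euc N → ℝ} (hc : Continuous η) (hi : Integrable η)
    {L : NNReal} (hL : LipschitzWith L η) (h : Euc N) (hh : h ≠ 0) :
    ∫⁻ x, ENNReal.ofReal (|η (x + h) - η x| ^ p) ≤
      ENNReal.ofReal (2 ^ p * (hkC N * (C1 * ‖h‖ ^ s)) ^ (p - 1)) *
      ∫⁻ σ in Ioi (0 : ℝ), ENNReal.ofReal (hkC N * min 1 (‖h‖ / √σ)) *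
        (ENNReal.ofReal (σ ^ ((1 - s / 2) * (p - 1))) *
          ∫⁻ x, ENNReal.ofReal (|hkW N η x σ| ^ p)) := by
  have hm := hc.measurable
  set F : Euc N → ℝ → Euc N → ENNReal := fun x σ y =>
    ENNReal.ofReal |hkG N (y + h) σ - hkG N y σ| *
        (ENNReal.ofReal (σ ^ ((1 - s / 2) * (p - 1))) *
          ENNReal.ofReal (|hkW N η (x - y) σ| ^ p)) with hF
  have hFm : Measurable (fun q : Euc N × ℝ × Euc N => F q.1 q.2.1 q.2.2) := by
    have hg1 : Measurable (fun q : Euc N × ℝ × Euc N => hkG N (q.2.2 + h) q.2.1) :=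
      hkG_meas.comp (f := fun q : Euc N × ℝ × Euc N => (q.2.2 + h, q.2.1)) (by fun_prop)
    have hg2 : Measurable (fun q : Euc N × ℝ × Euc N => hkG N q.2.2 q.2.1) :=
      hkG_meas.comp (f := fun q : Euc N × ℝ × Euc N => (q.2.2, q.2.1)) (by fun_prop)
    have hw : Measurable (fun q : Euc N × ℝ × Euc N => hkW N η (q.1 - q.2.2) q.2.1) :=
      (hkW_meas hm).comp (f := fun q : Euc N × ℝ × Euc N => (q.1 - q.2.2, q.2.1)) (by fun_prop)
    have hgd : Measurable (fun q : Euc N × ℝ × Euc N =>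
        ENNReal.ofReal |hkG N (q.2.2 + h) q.2.1 - hkG N q.2.2 q.2.1|) :=
      (hg1.sub hg2).norm.ennreal_ofReal
    have hwd : Measurable (fun q : Euc N × ℝ × Euc N =>
        ENNReal.ofReal (|hkW N η (q.1 - q.2.2) q.2.1| ^ p)) :=
      (hw.norm.pow_const p).ennreal_ofReal
    rw [hF]; fun_prop
  calc _ ≤ ∫⁻ x, ENNReal.ofReal (2 ^ p * (hkC N * (C1 * ‖h‖ ^ s)) ^ (p - 1)) *
          ∫⁻ σ in Ioi (0 : ℝ), ∫⁻ y, F x σ y :=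
        lintegral_mono fun x => hk_low1 hN hp hC1 hsig hc hi hL x h hh
    _ = ENNReal.ofReal (2 ^ p * (hkC N * (C1 * ‖h‖ ^ s)) ^ (p - 1)) *
          ∫⁻ σ in Ioi (0 : ℝ), ∫⁻ y, ∫⁻ x, F x σ y := by
        rw [lintegral_const_mul' _ _ ENNReal.ofReal_ne_top]
        congr 1
        rw [lintegral_lintegral_swap]
        · congr 1; funext σ
          rw [lintegral_lintegral_swap]
          apply Measurable.aemeasurable
          exact hFm.comp (f := fun q : Euc N × Euc N => (q.1, σ, q.2)) (by fun_prop)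
        · apply Measurable.aemeasurable
          show Measurable (fun q : Euc N × ℝ => ∫⁻ y, F q.1 q.2 y)
          apply Measurable.lintegral_prod_right' (f := fun q : (Euc N × ℝ) × Euc N =>
            F q.1.1 q.1.2 q.2)
          exact hFm.comp (f := fun q : (Euc N × ℝ) × Euc N => (q.1.1, q.1.2, q.2)) (by fun_prop)
    _ ≤ _ := by
        refine mul_le_mul_right (setLIntegral_mono' measurableSet_Ioi fun σ hσ => ?_) _
        have hσ : 0 < σ := hσ
        have e : ∀ y, ∫⁻ x, F x σ y = ENNReal.ofReal |hkG N (y + h) σ - hkG N y σ| *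
            (ENNReal.ofReal (σ ^ ((1 - s / 2) * (p - 1))) *
              ∫⁻ x, ENNReal.ofReal (|hkW N η x σ| ^ p)) := by
          intro y
          rw [hF]
          dsimp only
          rw [lintegral_const_mul' _ _ ENNReal.ofReal_ne_top,
            lintegral_const_mul' _ _ ENNReal.ofReal_ne_top,
            lintegral_sub_right_eq_self (fun x => ENNReal.ofReal (|hkW N η x σ| ^ p))]
        simp_rw [e]
        have hgd : Measurable (fun y : Euc N => ENNReal.ofReal |hkG N (y + h) σ - hkG N y σ|) := by
          have h1 := (hkG_cont (N := N) σ).measurable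
          have h2 : Measurable fun y : Euc N => hkG N (y + h) σ :=
            h1.comp (f := fun y : Euc N => y + h) (by fun_prop)
          exact (h2.sub h1).norm.ennreal_ofReal
        rw [lintegral_mul_const _ hgd]
        exact mul_le_mul_left (hkG_diff_lint h hσ) _

lemma hk_lower {N : ℕ} (hN : 0 < N) {s p : ℝ} (hs0 : 0 < s) (hs1 : s < 1) (hp : 1 < p) :
    ∃ C : ℝ, 0 < C ∧ ∀ η : Euc N → ℝ, Continuous η → Integrable η →
      (∃ L : NNReal, LipschitzWith L η) → hkA N s p η ≤ ENNReal.ofReal C * hkB N s p η := by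
  have hp0 : 0 < p := by linarith
  have hCp := hkC_pos N
  obtain ⟨C1, hC1, hsig⟩ := hk_sigma hs0 hs1
  obtain ⟨C2, hC2, hrad⟩ := hk_radial hN (a := s) (b := 1) hs0 hs1
  set K : ℝ := 2 ^ p * (hkC N * C1) ^ (p - 1) * hkC N with hK
  have hK0 : 0 < K := by positivity
  refine ⟨K * C2, by positivity, fun η hc hi ⟨L, hL⟩ => ?_⟩
  have hm := hc.measurable
  have hwm := hkW_meas hm
  set g : ℝ → ENNReal := fun σ => ∫⁻ x, ENNReal.ofReal (|hkW N η x σ| ^ p) with hg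
  have hgm : Measurable g := by
    rw [hg]
    apply Measurable.lintegral_prod_right' (f := fun q : ℝ × Euc N =>
      ENNReal.ofReal (|hkW N η q.2 q.1| ^ p))
    exact ((hwm.comp (f := fun q : ℝ × Euc N => (q.2, q.1)) (by fun_prop)).norm.pow_const
      p).ennreal_ofReal
  have hA : hkA N s p η = ∫⁻ h : Euc N, ENNReal.ofReal (1 / ‖h‖ ^ ((N : ℝ) + s * p)) *
      ∫⁻ x, ENNReal.ofReal (|η (x + h) - η x| ^ p) := by
    unfold hkA
    have : ∀ x, ∫⁻ y, ENNReal.ofReal (|η x - η y| ^ p / ‖x - y‖ ^ ((N : ℝ) + s * p)) =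
        ∫⁻ h, ENNReal.ofReal (1 / ‖h‖ ^ ((N : ℝ) + s * p)) *
          ENNReal.ofReal (|η (x + h) - η x| ^ p) := by
      intro x
      rw [← lintegral_add_left_eq_self _ x]
      refine lintegral_congr fun h => ?_
      rw [← ENNReal.ofReal_mul (by positivity), abs_sub_comm, sub_add_cancel_left, norm_neg]
      congr 1; ring
    simp_rw [this]
    rw [lintegral_lintegral_swap]
    · refine lintegral_congr fun h => ?_
      rw [lintegral_const_mul' _ _ ENNReal.ofReal_ne_top]
    · apply Measurable.aemeasurable
      show Measurable (fun q : Euc N × Euc N => ENNReal.ofReal (1 / ‖q.2‖ ^ ((N : ℝ) + s * p)) *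
          ENNReal.ofReal (|η (q.1 + q.2) - η q.1| ^ p))
      fun_prop
  have hB : hkB N s p η = ∫⁻ σ in Ioi (0 : ℝ),
      ENNReal.ofReal (σ ^ ((1 - s / 2) * p - 1)) * g σ := by
    unfold hkB
    refine setLIntegral_congr_fun measurableSet_Ioi fun t ht => ?_
    have ht : 0 < t := ht
    rw [hg]
    dsimp only
    rw [← lintegral_const_mul' _ _ ENNReal.ofReal_ne_top]
    refine lintegral_congr fun x => ?_
    rw [← ENNReal.ofReal_mul (by positivity)]
    congr 1
    rw [abs_mul, abs_of_pos (by positivity), Real.mul_rpow (by positivity) (abs_nonneg _),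
      ← Real.rpow_mul ht.le, Real.rpow_sub_one ht.ne']
    ring
  rw [hA, hB]
  calc _ ≤ ∫⁻ h : Euc N, ENNReal.ofReal K * ∫⁻ σ in Ioi (0 : ℝ),
          ENNReal.ofReal (min 1 ((‖h‖ / √σ) ^ (1:ℝ)) / ‖h‖ ^ ((N : ℝ) + s)) *
          (ENNReal.ofReal (σ ^ ((1 - s / 2) * (p - 1))) * g σ) := by
        refine lintegral_mono fun h => ?_
        by_cases hh : h = 0
        · subst hh
          simp [Real.zero_rpow hp0.ne']
        have hn : 0 < ‖h‖ := norm_pos_iff.2 hh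
        refine (mul_le_mul_right (hk_low2 hN hp hC1 hsig hc hi hL h hh) _).trans (le_of_eq ?_)
        rw [← mul_assoc, ← ENNReal.ofReal_mul (by positivity),
          ← lintegral_const_mul' _ _ ENNReal.ofReal_ne_top,
          ← lintegral_const_mul' _ _ ENNReal.ofReal_ne_top]
        refine lintegral_congr fun σ => ?_
        have key : 1 / ‖h‖ ^ ((N : ℝ) + s * p) * (2 ^ p * (hkC N * (C1 * ‖h‖ ^ s)) ^ (p - 1)) *
            (hkC N * min 1 (‖h‖ / √σ)) =
            K * (min 1 ((‖h‖ / √σ) ^ (1:ℝ)) / ‖h‖ ^ ((N : ℝ) + s)) := by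
          rw [Real.rpow_one, hK, ← mul_assoc (hkC N) C1,
            Real.mul_rpow (by positivity) (by positivity), ← Real.rpow_mul hn.le]
          have : ‖h‖ ^ ((N : ℝ) + s * p) = ‖h‖ ^ ((N : ℝ) + s) * ‖h‖ ^ (s * (p - 1)) := by
            rw [← Real.rpow_add hn]; congr 1; ring
          rw [this]
          field_simp
        rw [← mul_assoc, ← mul_assoc (ENNReal.ofReal K), ← ENNReal.ofReal_mul hK0.le, ← key,
          ← ENNReal.ofReal_mul (by positivity)]
    _ = ENNReal.ofReal K * ∫⁻ σ in Ioi (0 : ℝ), ∫⁻ h : Euc N,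
          ENNReal.ofReal (min 1 ((‖h‖ / √σ) ^ (1:ℝ)) / ‖h‖ ^ ((N : ℝ) + s)) *
          (ENNReal.ofReal (σ ^ ((1 - s / 2) * (p - 1))) * g σ) := by
        rw [lintegral_const_mul' _ _ ENNReal.ofReal_ne_top, lintegral_lintegral_swap]
        apply Measurable.aemeasurable
        show Measurable (fun q : Euc N × ℝ =>
          ENNReal.ofReal (min 1 ((‖q.1‖ / √q.2) ^ (1:ℝ)) / ‖q.1‖ ^ ((N : ℝ) + s)) *
          (ENNReal.ofReal (q.2 ^ ((1 - s / 2) * (p - 1))) * g q.2))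
        fun_prop
    _ ≤ ENNReal.ofReal K * ∫⁻ σ in Ioi (0 : ℝ), ENNReal.ofReal C2 *
          (ENNReal.ofReal (σ ^ ((1 - s / 2) * p - 1)) * g σ) := by
        refine mul_le_mul_right (setLIntegral_mono' measurableSet_Ioi fun σ hσ => ?_) _
        have hσ : 0 < σ := hσ
        rw [lintegral_mul_const _ (by fun_prop)]
        refine (mul_le_mul_left (hrad (√σ) (by positivity)) _).trans (le_of_eq ?_)
        rw [← mul_assoc, ← mul_assoc, ← ENNReal.ofReal_mul (by positivity),
          ← ENNReal.ofReal_mul (by positivity)]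
        congr 2
        rw [Real.sqrt_eq_rpow, ← Real.rpow_mul hσ.le, mul_assoc, ← Real.rpow_add hσ]
        congr 2; ring
    _ = _ := by
        rw [lintegral_const_mul' _ _ ENNReal.ofReal_ne_top, ← mul_assoc,
          ← ENNReal.ofReal_mul (by positivity)]

lemma hk_toReal {α β : Type*} [MeasurableSpace α] [MeasurableSpace β] (μ : Measure α)
    (ν : Measure β) [SFinite ν] (f : α → β → ℝ)
    (hm : Measurable (fun q : α × β => f q.1 q.2)) (h0 : ∀ᵐ a ∂μ, ∀ b, 0 ≤ f a b)
    (hfin : ∫⁻ a, ∫⁻ b, ENNReal.ofReal (f a b) ∂ν ∂μ < ⊤) :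
    ∫ a, ∫ b, f a b ∂ν ∂μ = (∫⁻ a, ∫⁻ b, ENNReal.ofReal (f a b) ∂ν ∂μ).toReal := by
  have hm2 : Measurable fun a => ∫⁻ b, ENNReal.ofReal (f a b) ∂ν :=
    Measurable.lintegral_prod_right' (f := fun q : α × β => ENNReal.ofReal (f q.1 q.2))
      hm.ennreal_ofReal
  rw [← integral_toReal hm2.aemeasurable (ae_lt_top hm2 hfin.ne)]
  refine integral_congr_ae ?_
  filter_upwards [h0] with a ha
  exact integral_eq_lintegral_of_nonneg_ae (Eventually.of_forall ha)
    (hm.comp (f := fun b => (a, b)) (by fun_prop)).aestronglyMeasurable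

lemma hk_zero {s p : ℝ} (hp : 1 < p) (η : Euc 0 → ℝ) :
    (∫ x, ∫ y, |η x - η y| ^ p / ‖x - y‖ ^ (((0 : ℕ) : ℝ) + s * p)) = 0 ∧
    (∫ t in Set.Ioi (0 : ℝ),
      (∫ x, |t ^ (1 - s / 2) * deriv (fun τ => heatPot 0 η x τ) t| ^ p) / t) = 0 := by
  have hp0 : p ≠ 0 := by linarith
  have hsub : Subsingleton (Euc 0) := by unfold Euc; infer_instance
  constructor
  · have : ∀ x y : Euc 0, |η x - η y| ^ p / ‖x - y‖ ^ (((0 : ℕ) : ℝ) + s * p) = 0 := fun x y => by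
      rw [Subsingleton.elim x y]; simp [Real.zero_rpow hp0]
    simp_rw [this]; simp
  · have : ∀ (x : Euc 0) t, deriv (fun τ => heatPot 0 η x τ) t = 0 := fun x t => by
      have e : (fun τ => heatPot 0 η x τ) = fun _ => ∫ y, η y := by
        funext τ
        unfold heatPot
        refine integral_congr_ae (Eventually.of_forall fun y => ?_)
        dsimp only
        rw [Subsingleton.elim x y]
        simp
      rw [e, deriv_const]
    simp [this, Real.zero_rpow hp0]

/-- Lemma 2.8: equivalence of the Gagliardo seminorm and its thermic description. -/
theorem stmt6 (N : ℕ) (s p : ℝ) (hs0 : 0 < s) (hs1 : s < 1) (hp : 1 < p) :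
    ∃ C : ℝ, 0 < C ∧
      ∀ η : Euc N → ℝ, ContDiff ℝ (⊤ : ℕ∞) η → HasCompactSupport η →
        C⁻¹ * (∫ x, ∫ y, |η x - η y| ^ p / ‖x - y‖ ^ ((N : ℝ) + s * p)) ^ (1 / p) ≤
            (∫ t in Set.Ioi (0 : ℝ),
              (∫ x, |t ^ (1 - s / 2) * deriv (fun τ => heatPot N η x τ) t| ^ p) / t) ^ (1 / p) ∧
          (∫ t in Set.Ioi (0 : ℝ),
              (∫ x, |t ^ (1 - s / 2) * deriv (fun τ => heatPot N η x τ) t| ^ p) / t) ^ (1 / p) ≤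
            C * (∫ x, ∫ y, |η x - η y| ^ p / ‖x - y‖ ^ ((N : ℝ) + s * p)) ^ (1 / p) := by
  have hp0 : 0 < p := by linarith
  rcases Nat.eq_zero_or_pos N with rfl | hN
  · refine ⟨1, one_pos, fun η _ _ => ?_⟩
    obtain ⟨h1, h2⟩ := hk_zero (s := s) hp η
    rw [h1, h2]
    simp
  obtain ⟨C1, hC1, hlow⟩ := hk_lower hN hs0 hs1 hp
  obtain ⟨C2, hC2, hup⟩ := hk_upper (N := N) (s := s) (p := p) hs0 hp
  have hD1 : 0 < C1 ^ (1 / p) := by positivity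
  have hD2 : 0 < C2 ^ (1 / p) := by positivity
  refine ⟨C1 ^ (1 / p) + C2 ^ (1 / p), by positivity, fun η hη hcs => ?_⟩
  have hc := hη.continuous
  have hi : Integrable η := hc.integrable_of_hasCompactSupport hcs
  have hm := hc.measurable
  obtain ⟨L, hL⟩ := ContDiff.lipschitzWith_of_hasCompactSupport hcs hη (by simp)
  have hAf := hkA_fin hN hs0 hs1 hp hc hcs hL
  have hl := hlow η hc hi ⟨L, hL⟩
  have hu := hup η hc hi
  have hBf : hkB N s p η < ⊤ := hu.trans_lt (ENNReal.mul_lt_top ENNReal.ofReal_lt_top hAf)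
  have hA : (∫ x, ∫ y, |η x - η y| ^ p / ‖x - y‖ ^ ((N : ℝ) + s * p)) =
      (hkA N s p η).toReal := by
    refine hk_toReal volume volume (fun x y => |η x - η y| ^ p / ‖x - y‖ ^ ((N : ℝ) + s * p))
      (by fun_prop) (Eventually.of_forall fun x y => by positivity) hAf
  have hB : (∫ t in Set.Ioi (0 : ℝ),
      (∫ x, |t ^ (1 - s / 2) * deriv (fun τ => heatPot N η x τ) t| ^ p) / t) =
      (hkB N s p η).toReal := by
    have hwm : Measurable fun q : ℝ × Euc N => hkW N η q.2 q.1 :=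
      (hkW_meas hm).comp (f := fun q : ℝ × Euc N => (q.2, q.1)) (by fun_prop)
    unfold hkB
    rw [← hk_toReal (volume.restrict (Ioi (0 : ℝ))) volume
      (fun t x => |t ^ (1 - s / 2) * hkW N η x t| ^ p / t) (by fun_prop) ?_ hBf]
    · refine setIntegral_congr_fun measurableSet_Ioi fun t ht => ?_
      rw [← integral_div]
      refine integral_congr_ae (Eventually.of_forall fun x => ?_)
      dsimp only
      rw [(heatPot_deriv hi x ht).deriv]
    · filter_upwards [ae_restrict_mem measurableSet_Ioi] with t ht x
      have ht : 0 < t := ht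
      positivity
  rw [hA, hB]
  have hl' := ENNReal.toReal_mono (ENNReal.mul_lt_top ENNReal.ofReal_lt_top hBf).ne hl
  have hu' := ENNReal.toReal_mono (ENNReal.mul_lt_top ENNReal.ofReal_lt_top hAf).ne hu
  rw [ENNReal.toReal_mul, ENNReal.toReal_ofReal hC1.le] at hl'
  rw [ENNReal.toReal_mul, ENNReal.toReal_ofReal hC2.le] at hu'
  set A := (hkA N s p η).toReal
  set B := (hkB N s p η).toReal
  have hA0 : 0 ≤ A := ENNReal.toReal_nonneg
  have hB0 : 0 ≤ B := ENNReal.toReal_nonneg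
  have hl2 := Real.rpow_le_rpow hA0 hl' (z := 1 / p) (by positivity)
  have hu2 := Real.rpow_le_rpow hB0 hu' (z := 1 / p) (by positivity)
  rw [Real.mul_rpow hC1.le hB0] at hl2
  rw [Real.mul_rpow hC2.le hA0] at hu2
  have hA1 : 0 ≤ A ^ (1 / p) := by positivity
  have hB1 : 0 ≤ B ^ (1 / p) := by positivity
  constructor
  · rw [inv_mul_le_iff₀ (by positivity)]
    nlinarith
  · nlinarith


end
end
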